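/- For every k ≥ 1 and every finite d ≥ 3: (a) W_opt(n, k, d) ≥ 4 for all n, and (b) there exists n (in fact n = k·d² works, realized by k copies of the rotated surface code) with W_opt(n, k, d) = 4. Hence the minimum over all blocklengths n of W_opt(n, k, d) equals 4. -/

import Mathlib

open scoped Classical

noncomputable section

/-- Pauli strings modulo phase, indexed by a finite type. -/
abbrev PauliT (ι : Type) : Type := ι → ZMod 2 × ZMod 2

abbrev Pauli (n : ℕ) : Type := PauliT (Fin n)

variable {ι : Type} [Fintype ι]

/-- Weight of a Pauli string. -/
def wt (v : PauliT ι) : ℕ := (Finset.univ.filter fun i => v i ≠ 0).card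

/-- Support of a Pauli string. -/
def suppF (v : PauliT ι) : Finset ι := Finset.univ.filter fun i => v i ≠ 0

/-- Symplectic form encoding commutation. -/
def sympl (u v : PauliT ι) : ZMod 2 :=
  ∑ i, ((u i).1 * (v i).2 + (u i).2 * (v i).1)

/-- `G` is a stabilizer group (isotropic subspace). -/
def IsStabilizer (G : Submodule (ZMod 2) (PauliT ι)) : Prop :=
  ∀ u ∈ G, ∀ v ∈ G, sympl u v = 0

/-- Membership in the symplectic dual `G^⊥`. -/
def inDual (G : Submodule (ZMod 2) (PauliT ι)) (v : PauliT ι) : Prop :=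
  ∀ g ∈ G, sympl v g = 0

/-- Distance: minimum weight of an element of `G^⊥ \ G`, `⊤` if none exists. -/
def distG (G : Submodule (ZMod 2) (PauliT ι)) : ℕ∞ :=
  sInf ((fun v => (wt v : ℕ∞)) '' {v | inDual G v ∧ v ∉ G})

/-- `g` is an `𝔽₂`-basis (indexed family) of `G`. -/
def IsBasisFam {r : ℕ} (G : Submodule (ZMod 2) (PauliT ι)) (g : Fin r → PauliT ι) : Prop :=
  LinearIndependent (ZMod 2) g ∧ Submodule.span (ZMod 2) (Set.range g) = G

/-- The weight of a stabilizer group: optimal maximum generator weight over bases. -/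
def Wgt (G : Submodule (ZMod 2) (PauliT ι)) : ℕ∞ :=
  ⨅ (r : ℕ) (g : Fin r → PauliT ι) (_ : IsBasisFam G g),
    Finset.univ.sup fun i => (wt (g i) : ℕ∞)

/-- Optimal weight over all `[[n,k,d]]` stabilizer codes. -/
def Wopt (n k : ℕ) (d : ℕ∞) : ℕ∞ :=
  ⨅ (G : Submodule (ZMod 2) (Pauli n))
    (_ : IsStabilizer G ∧ Module.finrank (ZMod 2) ↥G = n - k ∧ distG G = d),
    Wgt G

/-- Weight enumerator: number of elements of `G` of weight `j`. -/
def Aj (G : Submodule (ZMod 2) (PauliT ι)) (j : ℕ) : ℕ :=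
  Nat.card {g : PauliT ι // g ∈ G ∧ wt g = j}

/-- A weight-optimal generating set. -/
def IsWeightOptimalBasis {r : ℕ} (G : Submodule (ZMod 2) (PauliT ι))
    (g : Fin r → PauliT ι) : Prop :=
  IsBasisFam G g ∧ Monotone (fun i => wt (g i)) ∧
    ∀ h : Fin r → PauliT ι, IsBasisFam G h → Monotone (fun i => wt (h i)) →
      ∀ i, wt (g i) ≤ wt (h i)

/-- Set of average generator weights over all bases of `G`. -/
def WavgSet (G : Submodule (ZMod 2) (PauliT ι)) : Set ℚ :=
  {x | ∃ (r : ℕ) (g : Fin r → PauliT ι), IsBasisFam G g ∧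
        x = (∑ i, (wt (g i) : ℚ)) / (r : ℚ)}

/-- Splitting of Pauli strings along a bipartition given by a predicate. -/
def splitEquiv (p : ι → Prop) :
    PauliT ι ≃ₗ[ZMod 2] PauliT {x // p x} × PauliT {x // ¬ p x} :=
  (LinearEquiv.funCongrLeft (ZMod 2) (ZMod 2 × ZMod 2) (Equiv.sumCompl p)).trans
    (LinearEquiv.sumArrowLequivProdArrow _ _ _ _)

/-- Tensor product of subspaces along a bipartition. -/
def tensorAlong (p : ι → Prop)
    (GA : Submodule (ZMod 2) (PauliT {x // p x}))
    (GB : Submodule (ZMod 2) (PauliT {x // ¬ p x})) :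
    Submodule (ZMod 2) (PauliT ι) :=
  (GA.prod GB).comap (splitEquiv p).toLinearMap

/-- Decomposability as a tensor product over a nontrivial bipartition. -/
def Decomposable (G : Submodule (ZMod 2) (PauliT ι)) : Prop :=
  ∃ p : ι → Prop, (∃ x, p x) ∧ (∃ x, ¬ p x) ∧
    ∃ (GA : Submodule (ZMod 2) (PauliT {x // p x}))
      (GB : Submodule (ZMod 2) (PauliT {x // ¬ p x})),
      G = tensorAlong p GA GB

/-- Identification of `Pauli (n₁+n₂)` with `Pauli n₁ × Pauli n₂`. -/
def pauliSumEquiv (n₁ n₂ : ℕ) :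
    Pauli (n₁ + n₂) ≃ₗ[ZMod 2] Pauli n₁ × Pauli n₂ :=
  (LinearEquiv.funCongrLeft (ZMod 2) (ZMod 2 × ZMod 2) finSumFinEquiv).trans
    (LinearEquiv.sumArrowLequivProdArrow _ _ _ _)

/-- Tensor product of stabilizer subspaces on `n₁` and `n₂` qubits. -/
def tensorFin {n₁ n₂ : ℕ} (G₁ : Submodule (ZMod 2) (Pauli n₁))
    (G₂ : Submodule (ZMod 2) (Pauli n₂)) :
    Submodule (ZMod 2) (Pauli (n₁ + n₂)) :=
  (G₁.prod G₂).comap (pauliSumEquiv n₁ n₂).toLinearMap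



/-- local symplectic form -/
def lf (s t : ZMod 2 × ZMod 2) : ZMod 2 := s.1 * t.2 + s.2 * t.1

/-- local anticommutation -/
def an (s t : ZMod 2 × ZMod 2) : Prop := s ≠ 0 ∧ t ≠ 0 ∧ s ≠ t

lemma lf_an (s t : ZMod 2 × ZMod 2) : lf s t = 1 ↔ an s t := by
  unfold an lf; revert s t; decide

lemma lf_an0 (s t : ZMod 2 × ZMod 2) : lf s t = 0 ↔ ¬ an s t := by
  unfold an lf; revert s t; decide

lemma an_cases (x z : ZMod 2 × ZMod 2) (h : an x z) (s : ZMod 2 × ZMod 2) :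
    s = 0 ∨ s = x ∨ s = z ∨ s = x + z := by
  unfold an at h; revert x z s; decide

lemma an_add (x z : ZMod 2 × ZMod 2) (h : an x z) :
    x + z ≠ 0 ∧ x + z ≠ x ∧ x + z ≠ z := by
  unfold an at h; revert x z; decide

lemma lf_add_left (s t u : ZMod 2 × ZMod 2) : lf (s + t) u = lf s u + lf t u := by
  revert s t u; unfold lf; decide
lemma lf_comm (s t : ZMod 2 × ZMod 2) : lf s t = lf t s := by
  revert s t; unfold lf; decide
lemma lf_self (s : ZMod 2 × ZMod 2) : lf s s = 0 := by
  revert s; unfold lf; decide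
lemma lf_zero_left (s : ZMod 2 × ZMod 2) : lf 0 s = 0 := by
  revert s; unfold lf; decide
lemma lf_zero_right (s : ZMod 2 × ZMod 2) : lf s 0 = 0 := by
  revert s; unfold lf; decide
lemma lf_smul_left (c : ZMod 2) (s u : ZMod 2 × ZMod 2) : lf (c • s) u = c * lf s u := by
  revert c s u; unfold lf; decide
lemma self_add (x : ZMod 2 × ZMod 2) : x + x = 0 := by revert x; decide

lemma zm2 (c : ZMod 2) : c = 0 ∨ c = 1 := by revert c; decide

lemma sympl_eq (u v : PauliT ι) : sympl u v = ∑ i, lf (u i) (v i) := rfl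
lemma sympl_comm (u v : PauliT ι) : sympl u v = sympl v u := by
  simp only [sympl_eq]; exact Finset.sum_congr rfl fun i _ => lf_comm _ _
lemma sympl_self (u : PauliT ι) : sympl u u = 0 := by
  simp [sympl_eq, lf_self]
lemma sympl_add_left (u v w : PauliT ι) : sympl (u + v) w = sympl u w + sympl v w := by
  simp only [sympl_eq, Pi.add_apply, lf_add_left, Finset.sum_add_distrib]
lemma sympl_add_right (u v w : PauliT ι) : sympl w (u + v) = sympl w u + sympl w v := by
  rw [sympl_comm, sympl_add_left, sympl_comm u, sympl_comm v]
lemma sympl_smul_left (c : ZMod 2) (u w : PauliT ι) : sympl (c • u) w = c * sympl u w := by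
  simp only [sympl_eq, Pi.smul_apply, lf_smul_left, Finset.mul_sum]
lemma sympl_smul_right (c : ZMod 2) (u w : PauliT ι) : sympl w (c • u) = c * sympl w u := by
  rw [sympl_comm, sympl_smul_left, sympl_comm]
lemma sympl_zero_right (w : PauliT ι) : sympl w 0 = 0 := by
  simp [sympl_eq, lf_zero_right]

lemma sympl_span (S : Set (PauliT ι)) (v : PauliT ι) (h : ∀ s ∈ S, sympl v s = 0)
    (x : PauliT ι) (hx : x ∈ Submodule.span (ZMod 2) S) : sympl v x = 0 := by
  induction hx using Submodule.span_induction with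
  | mem x hx => exact h x hx
  | zero => exact sympl_zero_right v
  | add x y _ _ hx hy => rw [sympl_add_right, hx, hy, add_zero]
  | smul c x _ hx => rw [sympl_smul_right, hx, mul_zero]

/-- the symplectic form as a bilinear form -/
def sB (ι : Type) [Fintype ι] : LinearMap.BilinForm (ZMod 2) (PauliT ι) :=
  LinearMap.mk₂ (ZMod 2) sympl (fun u v w => sympl_add_left u v w)
    (fun c u w => by rw [sympl_smul_left, smul_eq_mul]) (fun w u v => sympl_add_right u v w)
    (fun c w u => by rw [sympl_smul_right, smul_eq_mul])

lemma sympl_single (q : ι) (t : ZMod 2 × ZMod 2) (v : PauliT ι) :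
    sympl (Pi.single q t) v = lf t (v q) := by
  rw [sympl_eq, Finset.sum_eq_single q]
  · simp
  · intro b _ hb; simp [Pi.single_eq_of_ne hb, lf_zero_left]
  · simp

lemma sB_refl : (sB ι).IsRefl := fun x y h => by
  change sympl y x = 0; rw [sympl_comm]; exact h

lemma lf_nd (t : ZMod 2 × ZMod 2) (h : ∀ s, lf s t = 0) : t = 0 := by
  revert t; unfold lf; decide

lemma sB_nondeg : (sB ι).Nondegenerate := by
  have key : ∀ v : PauliT ι, (∀ w, sympl w v = 0) → v = 0 := by
    intro v h
    funext q
    exact lf_nd _ fun s => by rw [← sympl_single]; exact h _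
  constructor
  · intro v h; exact key v fun w => by rw [sympl_comm]; exact h w
  · intro v h; exact key v fun w => h w

/-- the dual as a submodule -/
def dualS (G : Submodule (ZMod 2) (PauliT ι)) : Submodule (ZMod 2) (PauliT ι) :=
  (sB ι).orthogonal G

lemma mem_dualS (G : Submodule (ZMod 2) (PauliT ι)) (v : PauliT ι) :
    v ∈ dualS G ↔ inDual G v := by
  unfold dualS inDual
  rw [LinearMap.BilinForm.mem_orthogonal_iff]
  constructor
  · intro h g hg; rw [sympl_comm]; exact h g hg
  · intro h g hg; change sympl g v = 0; rw [sympl_comm]; exact h g hg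

lemma finrank_pauli : Module.finrank (ZMod 2) (PauliT ι) = 2 * Fintype.card ι := by
  rw [Module.finrank_pi_fintype]
  simp [mul_comm]

lemma finrank_dual (G : Submodule (ZMod 2) (PauliT ι)) :
    Module.finrank (ZMod 2) (dualS G) + Module.finrank (ZMod 2) G = 2 * Fintype.card ι := by
  have h := LinearMap.BilinForm.finrank_orthogonal (sB_nondeg (ι := ι)) G
  have h2 := Submodule.finrank_le G
  rw [finrank_pauli] at h h2
  unfold dualS
  omega

lemma finrank_lt (G : Submodule (ZMod 2) (PauliT ι)) (hG : IsStabilizer G) (v : PauliT ι)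
    (h1 : inDual G v) (h2 : v ∉ G) : Module.finrank (ZMod 2) G < Fintype.card ι := by
  have hlt : G < dualS G := by
    refine lt_of_le_of_ne (fun x hx => (mem_dualS G x).2 fun g hg => hG x hx g hg) ?_
    intro h; exact h2 (h ▸ (mem_dualS G v).2 h1)
  have := Submodule.finrank_lt_finrank_of_lt hlt
  have := finrank_dual G
  omega

lemma wt_four (F : PauliT ι) (h : wt F ≤ 3) (p q r s : ι) (hpq : p ≠ q) (hpr : p ≠ r) (hps : p ≠ s)
    (hqr : q ≠ r) (hqs : q ≠ s) (hrs : r ≠ s) : F p = 0 ∨ F q = 0 ∨ F r = 0 ∨ F s = 0 := by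
  by_contra hc
  push Not at hc
  have hsub : ({p, q, r, s} : Finset ι) ⊆ Finset.univ.filter fun i => F i ≠ 0 := by
    intro x hx
    simp only [Finset.mem_insert, Finset.mem_singleton] at hx
    simp only [Finset.mem_filter, Finset.mem_univ, true_and]
    rcases hx with rfl | rfl | rfl | rfl
    exacts [hc.1, hc.2.1, hc.2.2.1, hc.2.2.2]
  have h4 : ({p, q, r, s} : Finset ι).card = 4 := by
    simp [hpq, hpr, hps, hqr, hqs, hrs]
  have := Finset.card_le_card hsub
  unfold wt at h
  omega

lemma wt_two (F : PauliT ι) (p q : ι) (h : ∀ m, m ≠ p → m ≠ q → F m = 0) : wt F ≤ 2 := by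
  have hsub : (Finset.univ.filter fun i => F i ≠ 0) ⊆ ({p, q} : Finset ι) := by
    intro x hx
    simp only [Finset.mem_filter, Finset.mem_univ, true_and] at hx
    simp only [Finset.mem_insert, Finset.mem_singleton]
    by_contra hc
    push Not at hc
    exact hx (h x hc.1 hc.2)
  unfold wt
  exact (Finset.card_le_card hsub).trans Finset.card_le_two

lemma lf_four (c d e : ZMod 2) (h : c + d + e = 0) : ((c = 1 ↔ d = 1) ↔ ¬ e = 1) := by
  revert c d e; decide
lemma lf_two' (c d : ZMod 2) (h : c + d = 0) : (c = 1 ↔ d = 1) := by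
  revert c d; decide

lemma symp3 (F H : PauliT ι) (p q r : ι) (hpq : p ≠ q) (hpr : p ≠ r) (hqr : q ≠ r)
    (hF : ∀ m, m ≠ p → m ≠ q → m ≠ r → F m = 0) :
    sympl F H = lf (F p) (H p) + lf (F q) (H q) + lf (F r) (H r) := by
  rw [sympl_eq, ← Finset.sum_subset (Finset.subset_univ ({p, q, r} : Finset ι))]
  · rw [Finset.sum_insert (by simp [hpq, hpr]), Finset.sum_insert (by simp [hqr]),
      Finset.sum_singleton, add_assoc]
  · intro x _ hx
    simp only [Finset.mem_insert, Finset.mem_singleton, not_or] at hx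
    rw [hF x hx.1 hx.2.1 hx.2.2, lf_zero_left]

lemma symp2 (F H : PauliT ι) (p q : ι) (hpq : p ≠ q)
    (hF : ∀ m, m ≠ p → m ≠ q → F m = 0) :
    sympl F H = lf (F p) (H p) + lf (F q) (H q) := by
  rw [sympl_eq, ← Finset.sum_subset (Finset.subset_univ ({p, q} : Finset ι))]
  · rw [Finset.sum_insert (by simp [hpq]), Finset.sum_singleton]
  · intro x _ hx
    simp only [Finset.mem_insert, Finset.mem_singleton, not_or] at hx
    rw [hF x hx.1 hx.2, lf_zero_left]

lemma com3 (F H : PauliT ι) (p q r : ι) (hpq : p ≠ q) (hpr : p ≠ r) (hqr : q ≠ r)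
    (hF : ∀ m, m ≠ p → m ≠ q → m ≠ r → F m = 0) (h : sympl F H = 0) :
    ((an (F p) (H p) ↔ an (F q) (H q)) ↔ ¬ an (F r) (H r)) := by
  rw [symp3 F H p q r hpq hpr hqr hF] at h
  simpa only [lf_an] using lf_four _ _ _ h

lemma com2 (F H : PauliT ι) (p q : ι) (hpq : p ≠ q)
    (hH : ∀ m, m ≠ p → m ≠ q → H m = 0) (h : sympl F H = 0) :
    (an (F p) (H p) ↔ an (F q) (H q)) := by
  rw [sympl_comm, symp2 H F p q hpq hH, lf_comm, lf_comm (H q)] at h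
  simpa only [lf_an] using lf_two' _ _ h

structure EG (S : Set (PauliT ι)) (a b v w : PauliT ι) (q2 q3 q4 i j : ι) : Prop where
  n23 : q2 ≠ q3
  n24 : q2 ≠ q4
  n34 : q3 ≠ q4
  ni2 : i ≠ q2
  ni3 : i ≠ q3
  ni4 : i ≠ q4
  nj2 : j ≠ q2
  nj3 : j ≠ q3
  nj4 : j ≠ q4
  ha : ∀ m, m ≠ q2 → m ≠ q3 → a m = 0
  hb : ∀ m, m ≠ q2 → m ≠ q4 → b m = 0
  hv : ∀ m, m ≠ q4 → m ≠ j → v m = 0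
  hw : ∀ m, m ≠ q3 → m ≠ i → w m = 0
  h2 : an (a q2) (b q2)
  h3 : an (a q3) (w q3)
  h4 : an (v q4) (b q4)
  hvj : v j ≠ 0
  hwi : w i ≠ 0
  hS : ∀ F ∈ S, wt F ≤ 3
  hc : ∀ F ∈ S, ∀ H ∈ S, sympl F H = 0
  hSa : ∀ F ∈ S, sympl F a = 0
  hSb : ∀ F ∈ S, sympl F b = 0
  hSv : ∀ F ∈ S, sympl F v = 0
  hSw : ∀ F ∈ S, sympl F w = 0
  hC : ∀ y : PauliT ι, (∀ m, m ≠ q3 → m ≠ i → y m = 0) → (∀ F ∈ S, sympl y F = 0) →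
      sympl y a = 0 → sympl y b = 0 → sympl y v = 0
  e2 : ∀ t, t ≠ 0 → ∃ F ∈ S, an (F q2) t
  e3 : ∃ H ∈ S, an (H q3) (w q3)
  e4 : ∃ H ∈ S, an (H q4) (v q4)
  hn : ∀ F ∈ S, ∀ H ∈ S, F + H ≠ a + v

lemma EG.c1 {S : Set (PauliT ι)} {a b v w : PauliT ι} {q2 q3 q4 i j : ι}
    (E : EG S a b v w q2 q3 q4 i j) :
    ∀ F ∈ S, (an (F q2) (a q2) ↔ an (F q3) (a q3)) := by
  obtain ⟨n23, n24, n34, ni2, ni3, ni4, nj2, nj3, nj4, ha, hb, hv, hw, h2, h3, h4, hvj, hwi, hS, hc, hSa, hSb, hSv, hSw, hC, e2, e3, e4, hn⟩ := E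
  exact fun F hF =>
    com2 F a q2 q3 n23 ha (hSa F hF)

lemma EG.c2 {S : Set (PauliT ι)} {a b v w : PauliT ι} {q2 q3 q4 i j : ι}
    (E : EG S a b v w q2 q3 q4 i j) :
    ∀ F ∈ S, (an (F q2) (b q2) ↔ an (F q4) (b q4)) := by
  obtain ⟨n23, n24, n34, ni2, ni3, ni4, nj2, nj3, nj4, ha, hb, hv, hw, h2, h3, h4, hvj, hwi, hS, hc, hSa, hSb, hSv, hSw, hC, e2, e3, e4, hn⟩ := E
  exact fun F hF =>
    com2 F b q2 q4 n24 hb (hSb F hF)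

lemma EG.c3 {S : Set (PauliT ι)} {a b v w : PauliT ι} {q2 q3 q4 i j : ι}
    (E : EG S a b v w q2 q3 q4 i j) :
    ∀ F ∈ S, (an (F q4) (v q4) ↔ an (F j) (v j)) := by
  obtain ⟨n23, n24, n34, ni2, ni3, ni4, nj2, nj3, nj4, ha, hb, hv, hw, h2, h3, h4, hvj, hwi, hS, hc, hSa, hSb, hSv, hSw, hC, e2, e3, e4, hn⟩ := E
  exact fun F hF =>
    com2 F v q4 j nj4.symm hv (hSv F hF)

lemma EG.c4 {S : Set (PauliT ι)} {a b v w : PauliT ι} {q2 q3 q4 i j : ι}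
    (E : EG S a b v w q2 q3 q4 i j) :
    ∀ F ∈ S, (an (F q3) (w q3) ↔ an (F i) (w i)) := by
  obtain ⟨n23, n24, n34, ni2, ni3, ni4, nj2, nj3, nj4, ha, hb, hv, hw, h2, h3, h4, hvj, hwi, hS, hc, hSa, hSb, hSv, hSw, hC, e2, e3, e4, hn⟩ := E
  exact fun F hF =>
    com2 F w q3 i ni3.symm hw (hSw F hF)

lemma EG.w4 {S : Set (PauliT ι)} {a b v w : PauliT ι} {q2 q3 q4 i j : ι}
    (E : EG S a b v w q2 q3 q4 i j) :
    ∀ F ∈ S, ∀ p q r s : ι, p ≠ q → p ≠ r → p ≠ s → q ≠ r → q ≠ s → r ≠ s → 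
      F p ≠ 0 → F q ≠ 0 → F r ≠ 0 → F s = 0 := by
  obtain ⟨n23, n24, n34, ni2, ni3, ni4, nj2, nj3, nj4, ha, hb, hv, hw, h2, h3, h4, hvj, hwi, hS, hc, hSa, hSb, hSv, hSw, hC, e2, e3, e4, hn⟩ := E
  intro F hF p q r s h1 h2 h3 h4 h5 h6 h7 h8 h9
  have := wt_four F (hS F hF) p q r s h1 h2 h3 h4 h5 h6
  tauto

lemma EG.fr2 {S : Set (PauliT ι)} {a b v w : PauliT ι} {q2 q3 q4 i j : ι}
    (E : EG S a b v w q2 q3 q4 i j) (s : ZMod 2 × ZMod 2) :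
    s = 0 ∨ s = a q2 ∨ s = b q2 ∨ s = a q2 + b q2 := an_cases _ _ E.h2 s

lemma EG.ad2 {S : Set (PauliT ι)} {a b v w : PauliT ι} {q2 q3 q4 i j : ι}
    (E : EG S a b v w q2 q3 q4 i j) :
    a q2 + b q2 ≠ 0 ∧ a q2 + b q2 ≠ a q2 ∧ a q2 + b q2 ≠ b q2 := an_add _ _ E.h2

lemma EG.fr3 {S : Set (PauliT ι)} {a b v w : PauliT ι} {q2 q3 q4 i j : ι}
    (E : EG S a b v w q2 q3 q4 i j) (s : ZMod 2 × ZMod 2) :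
    s = 0 ∨ s = a q3 ∨ s = w q3 ∨ s = a q3 + w q3 := an_cases _ _ E.h3 s

lemma EG.ad3 {S : Set (PauliT ι)} {a b v w : PauliT ι} {q2 q3 q4 i j : ι}
    (E : EG S a b v w q2 q3 q4 i j) :
    a q3 + w q3 ≠ 0 ∧ a q3 + w q3 ≠ a q3 ∧ a q3 + w q3 ≠ w q3 := an_add _ _ E.h3

lemma EG.fr4 {S : Set (PauliT ι)} {a b v w : PauliT ι} {q2 q3 q4 i j : ι}
    (E : EG S a b v w q2 q3 q4 i j) (s : ZMod 2 × ZMod 2) :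
    s = 0 ∨ s = v q4 ∨ s = b q4 ∨ s = v q4 + b q4 := an_cases _ _ E.h4 s

lemma EG.ad4 {S : Set (PauliT ι)} {a b v w : PauliT ι} {q2 q3 q4 i j : ι}
    (E : EG S a b v w q2 q3 q4 i j) :
    v q4 + b q4 ≠ 0 ∧ v q4 + b q4 ≠ v q4 ∧ v q4 + b q4 ≠ b q4 := an_add _ _ E.h4

lemma EG.tX {S : Set (PauliT ι)} {a b v w : PauliT ι} {q2 q3 q4 i j : ι}
    (E : EG S a b v w q2 q3 q4 i j) :
    ∀ F ∈ S, F q2 = a q2 → F q3 = 0 ∧ (F q4 = v q4 ∨ F q4 = v q4 + b q4) ∧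
      ¬ an (F i) (w i) := by
  have c1 := E.c1
  have c2 := E.c2
  have c3 := E.c3
  have c4 := E.c4
  have w4 := E.w4
  have fr2 := E.fr2
  have fr3 := E.fr3
  have fr4 := E.fr4
  have ad2 := E.ad2
  have ad3 := E.ad3
  have ad4 := E.ad4
  obtain ⟨n23, n24, n34, ni2, ni3, ni4, nj2, nj3, nj4, -, -, -, -, h2, h3, h4, hvj, hwi, -, -, -, -, -, -, -, -, -, -, -⟩ := E
  intro F hF h
  have c1 := c1 F hF; have c2 := c2 F hF; have c4 := c4 F hF
  have W := w4 F hF q2 q3 q4 i n23 n24 ni2.symm n34 ni3.symm ni4.symm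
  have f3 := fr3 (F q3); have f4 := fr4 (F q4)
  unfold an at *
  grind

lemma EG.tZ {S : Set (PauliT ι)} {a b v w : PauliT ι} {q2 q3 q4 i j : ι}
    (E : EG S a b v w q2 q3 q4 i j) :
    ∀ F ∈ S, F q2 = b q2 → F q4 = 0 ∧ (F q3 = w q3 ∨ F q3 = a q3 + w q3) ∧
      ¬ an (F j) (v j) := by
  have c1 := E.c1
  have c2 := E.c2
  have c3 := E.c3
  have c4 := E.c4
  have w4 := E.w4
  have fr2 := E.fr2
  have fr3 := E.fr3
  have fr4 := E.fr4
  have ad2 := E.ad2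
  have ad3 := E.ad3
  have ad4 := E.ad4
  obtain ⟨n23, n24, n34, ni2, ni3, ni4, nj2, nj3, nj4, -, -, -, -, h2, h3, h4, hvj, hwi, -, -, -, -, -, -, -, -, -, -, -⟩ := E
  intro F hF h
  have c1 := c1 F hF; have c2 := c2 F hF; have c3 := c3 F hF
  have W := w4 F hF q2 q3 q4 j n23 n24 nj2.symm n34 nj3.symm nj4.symm
  have f3 := fr3 (F q3); have f4 := fr4 (F q4)
  unfold an at *
  grind

lemma EG.tY {S : Set (PauliT ι)} {a b v w : PauliT ι} {q2 q3 q4 i j : ι}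
    (E : EG S a b v w q2 q3 q4 i j) :
    ∀ F ∈ S, F q2 = a q2 + b q2 → F q3 = w q3 ∧ F q4 = v q4 ∧
      ∀ m, m ≠ q2 → m ≠ q3 → m ≠ q4 → F m = 0 := by
  have c1 := E.c1
  have c2 := E.c2
  have c3 := E.c3
  have c4 := E.c4
  have w4 := E.w4
  have fr2 := E.fr2
  have fr3 := E.fr3
  have fr4 := E.fr4
  have ad2 := E.ad2
  have ad3 := E.ad3
  have ad4 := E.ad4
  obtain ⟨n23, n24, n34, ni2, ni3, ni4, nj2, nj3, nj4, -, -, -, -, h2, h3, h4, hvj, hwi, -, -, -, -, -, -, -, -, -, -, -⟩ := E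
  intro F hF h
  have c1 := c1 F hF; have c2 := c2 F hF; have c3 := c3 F hF; have c4 := c4 F hF
  have W := fun m h1 h2 h3 => w4 F hF q2 q3 q4 m n23 n24 h1 n34 h2 h3
  have W1 := W i ni2.symm ni3.symm ni4.symm
  have W2 := W j nj2.symm nj3.symm nj4.symm
  have f3 := fr3 (F q3); have f4 := fr4 (F q4)
  have : F q3 ≠ 0 ∧ F q4 ≠ 0 ∧ F q2 ≠ 0 := by
    unfold an at *
    grind
  refine ⟨?_, ?_, fun m h1 h2 h3 => W m h1.symm h2.symm h3.symm this.2.2 this.1 this.2.1⟩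
  · unfold an at *
    grind
  · unfold an at *
    grind

lemma EG.tH {S : Set (PauliT ι)} {a b v w : PauliT ι} {q2 q3 q4 i j : ι}
    (E : EG S a b v w q2 q3 q4 i j) :
    ∀ H ∈ S, an (H q3) (w q3) → an (H i) (w i) ∧
      ((H q2 = b q2 ∧ H q3 = a q3 + w q3 ∧ H q4 = 0 ∧ 
        ∀ m, m ≠ q2 → m ≠ q3 → m ≠ i → H m = 0) ∨
      (H q2 = 0 ∧ H q3 = a q3 ∧ H q4 = b q4 ∧ i = j ∧ an (H i) (v i) ∧
        ∀ m, m ≠ q3 → m ≠ q4 → m ≠ i → H m = 0) ∨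
      (H q2 = 0 ∧ H q3 = a q3 ∧ H q4 = 0)) := by
  have c1 := E.c1
  have c2 := E.c2
  have c3 := E.c3
  have c4 := E.c4
  have w4 := E.w4
  have fr2 := E.fr2
  have fr3 := E.fr3
  have fr4 := E.fr4
  have ad2 := E.ad2
  have ad3 := E.ad3
  have ad4 := E.ad4
  obtain ⟨n23, n24, n34, ni2, ni3, ni4, nj2, nj3, nj4, -, -, -, -, h2, h3, h4, hvj, hwi, -, -, -, -, -, -, -, -, -, -, -⟩ := E
  intro H hH h
  have c1 := c1 H hH; have c2 := c2 H hH; have c3 := c3 H hH; have c4 := c4 H hH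
  have W := fun m h1 h2 h3 => w4 H hH q2 q3 i m n23 ni2.symm h1 ni3.symm h2 h3
  have W' := fun m h1 h2 h3 => w4 H hH q3 q4 i m n34 ni3.symm h1 ni4.symm h2 h3
  have W1 := W q4 n24 n34 ni4
  have W2 := W' j nj3.symm nj4.symm
  have f2 := fr2 (H q2); have f3 := fr3 (H q3); have f4 := fr4 (H q4)
  refine ⟨c4.1 h, ?_⟩
  have hi := c4.1 h
  by_cases z2 : H q2 = 0
  · right
    by_cases z4 : H q4 = 0
    · right; unfold an at *; grind
    · left; 
      have : H q3 ≠ 0 ∧ H i ≠ 0 := by unfold an at *; grind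
      refine ⟨z2, ?_, ?_, ?_, ?_, fun m h1 h2 h3 => 
        W' m h1.symm h2.symm h3.symm this.1 z4 this.2⟩ <;> unfold an at * <;> grind
  · left
    have : H q3 ≠ 0 ∧ H i ≠ 0 := by unfold an at *; grind
    refine ⟨?_, ?_, ?_, fun m h1 h2 h3 => 
        W m h1.symm h2.symm h3.symm z2 this.1 this.2⟩ <;> unfold an at * <;> grind

lemma EG.tK {S : Set (PauliT ι)} {a b v w : PauliT ι} {q2 q3 q4 i j : ι}
    (E : EG S a b v w q2 q3 q4 i j) :
    ∀ K ∈ S, an (K q4) (v q4) → an (K j) (v j) ∧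
      ((K q2 = a q2 ∧ K q4 = v q4 + b q4 ∧ K q3 = 0 ∧ 
        ∀ m, m ≠ q2 → m ≠ q4 → m ≠ j → K m = 0) ∨
      (K q2 = 0 ∧ K q3 = a q3 ∧ an (K q3) (w q3)  ∧ K q4 = b q4) ∨
      (K q2 = 0 ∧ K q3 = 0 ∧ K q4 = b q4)) := by
  have c1 := E.c1
  have c2 := E.c2
  have c3 := E.c3
  have c4 := E.c4
  have w4 := E.w4
  have fr2 := E.fr2
  have fr3 := E.fr3
  have fr4 := E.fr4
  have ad2 := E.ad2
  have ad3 := E.ad3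
  have ad4 := E.ad4
  obtain ⟨n23, n24, n34, ni2, ni3, ni4, nj2, nj3, nj4, -, -, -, -, h2, h3, h4, hvj, hwi, -, -, -, -, -, -, -, -, -, -, -⟩ := E
  intro H hH h
  have c1 := c1 H hH; have c2 := c2 H hH; have c3 := c3 H hH; have c4 := c4 H hH
  have W := fun m h1 h2 h3 => w4 H hH q2 q4 j m n24 nj2.symm h1 nj4.symm h2 h3
  have W1 := W q3 n23 n34.symm nj3
  have f2 := fr2 (H q2); have f3 := fr3 (H q3); have f4 := fr4 (H q4)
  refine ⟨c3.1 h, ?_⟩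
  have hi := c3.1 h
  by_cases z2 : H q2 = 0
  · right
    by_cases z4 : H q3 = 0
    · right; unfold an at *; grind
    · left; unfold an at *; grind
  · left
    have : H q4 ≠ 0 ∧ H j ≠ 0 := by unfold an at *; grind
    refine ⟨?_, ?_, ?_, fun m h1 h2 h3 => 
        W m h1.symm h2.symm h3.symm z2 this.1 this.2⟩ <;> unfold an at * <;> grind


lemma an_third (s x z : ZMod 2 × ZMod 2) (h1 : an s x) (h2 : an s z) (h3 : an x z) :
    z + s = x := by
  unfold an at *; revert s x z; decide

lemma L_cancel (x z : ZMod 2 × ZMod 2) : x + z + z = x := by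
  revert x z; decide

lemma comex (F H : PauliT ι) (p : ι) (h : sympl F H = 0) (hp : an (F p) (H p)) :
    ∃ r, r ≠ p ∧ an (F r) (H r) := by
  by_contra hc
  push Not at hc
  rw [sympl_eq, Finset.sum_eq_single p] at h
  · rw [← lf_an, h] at hp; exact absurd hp (by decide)
  · intro r _ hr; rw [lf_an0]; exact hc r hr
  · simp

lemma EG.e2X {S : Set (PauliT ι)} {a b v w : PauliT ι} {q2 q3 q4 i j : ι}
    (E : EG S a b v w q2 q3 q4 i j) :
    ∃ F ∈ S, F q2 = b q2 ∨ F q2 = a q2 + b q2 := by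
  obtain ⟨F, hF, h⟩ := E.e2 (a q2) E.h2.1
  have f := E.fr2 (F q2); have h2 := E.h2
  refine ⟨F, hF, ?_⟩
  unfold an at *; grind

lemma EG.e2Z {S : Set (PauliT ι)} {a b v w : PauliT ι} {q2 q3 q4 i j : ι}
    (E : EG S a b v w q2 q3 q4 i j) :
    ∃ F ∈ S, F q2 = a q2 ∨ F q2 = a q2 + b q2 := by
  obtain ⟨F, hF, h⟩ := E.e2 (b q2) E.h2.2.1
  have f := E.fr2 (F q2); have h2 := E.h2
  refine ⟨F, hF, ?_⟩
  unfold an at *; grind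

lemma EG.e2Y {S : Set (PauliT ι)} {a b v w : PauliT ι} {q2 q3 q4 i j : ι}
    (E : EG S a b v w q2 q3 q4 i j) :
    ∃ F ∈ S, F q2 = a q2 ∨ F q2 = b q2 := by
  obtain ⟨F, hF, h⟩ := E.e2 (a q2 + b q2) E.ad2.1
  have f := E.fr2 (F q2); have h2 := E.h2
  refine ⟨F, hF, ?_⟩
  unfold an at *; grind

/-- the special weight-three element of case delta -/
def EGH (a b v w : PauliT ι) (q2 q3 q4 i j : ι) (H : PauliT ι) : Prop :=
  H q2 = 0 ∧ H q3 = a q3 ∧ H q4 = b q4 ∧ i = j ∧ an (H i) (v i) ∧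
        an (H i) (w i) ∧ ∀ m, m ≠ q3 → m ≠ q4 → m ≠ i → H m = 0

lemma EG.dX {S : Set (PauliT ι)} {a b v w : PauliT ι} {q2 q3 q4 i j : ι}
    (E : EG S a b v w q2 q3 q4 i j) {H F : PauliT ι} (hH : H ∈ S) (hF : F ∈ S)
    (hd : EGH a b v w q2 q3 q4 i j H) (hx : F q2 = a q2) :
    v i = w i ∧ F i = w i ∧ F q3 = 0 ∧ F q4 = v q4 ∧ 
      ∀ m, m ≠ q2 → m ≠ q4 → m ≠ i → F m = 0 := by
  obtain ⟨d2, d3, d4, rfl, dv, dw, d0⟩ := hd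
  obtain ⟨t3, t4, ti⟩ := E.tX F hF hx
  have cc := com3 H F q3 q4 i E.n34 E.ni3.symm E.ni4.symm d0 (E.hc H hH F hF)
  have c3 := E.c3 F hF
  have h2 := E.h2; have h4 := E.h4; have ad4 := E.ad4; have hwi := E.hwi; have hvj := E.hvj
  have hFi : F i = w i := by unfold an at *; grind
  have hF4 : F q4 ≠ 0 := by unfold an at *; grind
  have W := fun m h1 h2 h3 => E.w4 F hF q2 q4 i m E.n24 E.ni2.symm h1 E.ni4.symm h2 h3
    (by rw [hx]; exact E.h2.1) hF4 (by rw [hFi]; exact hwi)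
  have W' : ∀ m, m ≠ q2 → m ≠ q4 → m ≠ i → F m = 0 := fun m h1 h2 h3 => 
    W m h1.symm h2.symm h3.symm
  by_cases hvw : v i = w i
  · refine ⟨hvw, hFi, t3, ?_, W'⟩
    unfold an at *; grind
  · exfalso
    have hA : an (v i) (w i) := ⟨hvj, hwi, hvw⟩
    have h44 : F q4 = v q4 + b q4 := by unfold an at *; grind
    refine E.hn F hF H hH ?_
    funext m
    simp only [Pi.add_apply]
    by_cases m2 : m = q2
    · subst m2; rw [hx, d2, E.hv _ E.n24 E.ni2.symm]
    by_cases m3 : m = q3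
    · subst m3; rw [t3, d3, E.hv _ E.n34 E.ni3.symm, add_comm]
    by_cases m4 : m = q4
    · subst m4; rw [h44, d4, E.ha _ m2 m3, L_cancel, zero_add]
    by_cases mi : m = i
    · subst mi; rw [hFi, E.ha _ m2 m3, zero_add]; exact an_third _ _ _ dv dw hA
    rw [W' m m2 m4 mi, d0 m m3 m4 mi, E.ha m m2 m3, E.hv m m4 mi]

lemma EG.dZ {S : Set (PauliT ι)} {a b v w : PauliT ι} {q2 q3 q4 i j : ι}
    (E : EG S a b v w q2 q3 q4 i j) {H F Y : PauliT ι} (hH : H ∈ S) (hF : F ∈ S) (hY : Y ∈ S)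
    (hd : EGH a b v w q2 q3 q4 i j H) (hx : F q2 = b q2) (hy : Y q2 = a q2 + b q2) : False := by
  obtain ⟨d2, d3, d4, rfl, dv, dw, d0⟩ := hd
  obtain ⟨t4, t3, ti⟩ := E.tZ F hF hx
  obtain ⟨y3, y4, y0⟩ := E.tY Y hY hy
  have cc := com3 H F q3 q4 i E.n34 E.ni3.symm E.ni4.symm d0 (E.hc H hH F hF)
  have cy := com3 Y F q2 q3 q4 E.n23 E.n24 E.n34 y0 (E.hc Y hY F hF)
  have c4 := E.c4 F hF
  have h2 := E.h2; have h3 := E.h3; have ad3 := E.ad3; have hwi := E.hwi; have hvj := E.hvj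
  have ad2 := E.ad2
  have hFi : F i = v i := by unfold an at *; grind
  have hF3 : F q3 ≠ 0 := by unfold an at *; grind
  have W := fun m h1 h2 h3 => E.w4 F hF q2 q3 i m E.n23 E.ni2.symm h1 E.ni3.symm h2 h3
    (by rw [hx]; exact E.h2.2.1) hF3 (by rw [hFi]; exact hvj)
  have W' : ∀ m, m ≠ q2 → m ≠ q3 → m ≠ i → F m = 0 := fun m h1 h2 h3 => 
    W m h1.symm h2.symm h3.symm
  have h33 : F q3 = a q3 + w q3 := by unfold an at *; grind
  refine E.hn F hF Y hY ?_
  funext m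
  simp only [Pi.add_apply]
  by_cases m2 : m = q2
  · subst m2; rw [hx, hy, E.hv _ E.n24 E.ni2.symm, add_comm (b m), L_cancel, add_zero]
  by_cases m3 : m = q3
  · subst m3; rw [h33, y3, E.hv _ E.n34 E.ni3.symm, L_cancel, add_zero]
  by_cases m4 : m = q4
  · subst m4; rw [t4, y4, E.ha _ m2 m3]
  by_cases mi : m = i
  · subst mi; rw [hFi, E.ha _ m2 m3, y0 m m2 m3 m4, add_comm]
  rw [W' m m2 m3 mi, y0 m m2 m3 m4, E.ha m m2 m3, E.hv m m4 mi]

lemma EG.delta {S : Set (PauliT ι)} {a b v w : PauliT ι} {q2 q3 q4 i j : ι}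
    (E : EG S a b v w q2 q3 q4 i j) {H : PauliT ι} (hH : H ∈ S)
    (hd : EGH a b v w q2 q3 q4 i j H) : False := by
  have h2 := E.h2; have ad2 := E.ad2
  -- X with Y
  have XY : ∀ F ∈ S, ∀ Y ∈ S, F q2 = a q2 → Y q2 = a q2 + b q2 → False := by
    intro F hF Y hY hx hy
    obtain ⟨f0, f1, f2, f3, f4⟩ := E.dX hH hF hd hx
    obtain ⟨y3, y4, y0⟩ := E.tY Y hY hy
    have cy := com3 Y F q2 q3 q4 E.n23 E.n24 E.n34 y0 (E.hc Y hY F hF)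
    unfold an at *; grind
  have XZ : ∀ F ∈ S, ∀ Y ∈ S, F q2 = a q2 → Y q2 = b q2 → False := by
    intro F hF Y hY hx hy
    obtain ⟨f0, f1, f2, f3, f4⟩ := E.dX hH hF hd hx
    obtain ⟨y4, y3, yi⟩ := E.tZ Y hY hy
    have hij : i = j := hd.2.2.2.1
    subst hij
    have hwi := E.hwi
    have cy := com3 F Y q2 q4 i E.n24 E.ni2.symm E.ni4.symm f4 (E.hc F hF Y hY)
    unfold an at *; grind
  have ZY : ∀ F ∈ S, ∀ Y ∈ S, F q2 = b q2 → Y q2 = a q2 + b q2 → False := 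
    fun F hF Y hY hx hy => E.dZ hH hF hY hd hx hy
  obtain ⟨F1, g1, k1⟩ := E.e2X
  obtain ⟨F2, g2, k2⟩ := E.e2Y
  obtain ⟨F3, g3, k3⟩ := E.e2Z
  rcases k1 with k1 | k1 <;> rcases k2 with k2 | k2 <;> rcases k3 with k3 | k3 
  · exact XZ _ g3 _ g1 k3 k1
  · exact ZY _ g1 _ g3 k1 k3
  · exact XZ _ g3 _ g1 k3 k1
  · exact ZY _ g1 _ g3 k1 k3
  · exact XY _ g2 _ g1 k2 k1
  · exact XY _ g2 _ g1 k2 k1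
  · exact ZY _ g2 _ g1 k2 k1
  · exact ZY _ g2 _ g1 k2 k1

lemma EG.gam {S : Set (PauliT ι)} {a b v w : PauliT ι} {q2 q3 q4 i j : ι}
    (E : EG S a b v w q2 q3 q4 i j) {H K : PauliT ι} (hH : H ∈ S) (hK : K ∈ S)
    (H2 : H q2 = b q2) (H3 : H q3 = a q3 + w q3) (H4 : H q4 = 0) (Hi : an (H i) (w i))
    (H0 : ∀ m, m ≠ q2 → m ≠ q3 → m ≠ i → H m = 0)
    (K2 : K q2 = 0) (K3 : K q3 = 0) (K4 : K q4 = b q4) (Kj : an (K j) (v j)) : False := by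
  have h2 := E.h2; have h4 := E.h4; have ad2 := E.ad2
  have cHK := com3 H K q2 q3 i E.n23 E.ni2.symm E.ni3.symm H0 (E.hc H hH K hK)
  have c4 := E.c4 K hK
  have Ki : K i = 0 := by unfold an at *; grind
  have hij : j ≠ i := by rintro rfl; exact Kj.1 Ki
  obtain ⟨F, hF, hx | hy⟩ := E.e2Z
  · obtain ⟨t3, t4, ti⟩ := E.tX F hF hx
    have cc := com3 H F q2 q3 i E.n23 E.ni2.symm E.ni3.symm H0 (E.hc H hH F hF)
    have c3 := E.c3 F hF
    have ad4 := E.ad4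
    have Fi : F i ≠ 0 := by unfold an at *; grind
    have F4 : F q4 ≠ 0 := by unfold an at *; grind
    have W : ∀ m, m ≠ q2 → m ≠ q4 → m ≠ i → F m = 0 := fun m h1 h2 h3 => 
      E.w4 F hF q2 q4 i m E.n24 E.ni2.symm h1.symm E.ni4.symm h2.symm h3.symm 
      (by rw [hx]; exact E.h2.1) F4 Fi
    have Fj := W j E.nj2 E.nj4 hij
    have cK := com3 F K q2 q4 i E.n24 E.ni2.symm E.ni4.symm W (E.hc F hF K hK)
    unfold an at *; grind
  · obtain ⟨y3, y4, y0⟩ := E.tY F hF hy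
    have cy := com3 F K q2 q3 q4 E.n23 E.n24 E.n34 y0 (E.hc F hF K hK)
    unfold an at *; grind

lemma EG.gam' {S : Set (PauliT ι)} {a b v w : PauliT ι} {q2 q3 q4 i j : ι}
    (E : EG S a b v w q2 q3 q4 i j) {H K : PauliT ι} (hH : H ∈ S) (hK : K ∈ S)
    (H2 : H q2 = 0) (H3 : H q3 = a q3) (H4 : H q4 = 0) (Hi : an (H i) (w i))
    (K2 : K q2 = a q2) (K4 : K q4 = v q4 + b q4) (K3 : K q3 = 0) (Kj : an (K j) (v j))
    (K0 : ∀ m, m ≠ q2 → m ≠ q4 → m ≠ j → K m = 0) : False := by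
  have h2 := E.h2; have h3 := E.h3; have ad2 := E.ad2
  have cHK := com3 K H q2 q4 j E.n24 E.nj2.symm E.nj4.symm K0 (E.hc K hK H hH)
  have c3 := E.c3 H hH
  have Hj : H j = 0 := by unfold an at *; grind
  have hij : i ≠ j := by rintro rfl; exact Hi.1 Hj
  obtain ⟨F, hF, hx | hy⟩ := E.e2X
  · obtain ⟨t4, t3, ti⟩ := E.tZ F hF hx
    have cc := com3 K F q2 q4 j E.n24 E.nj2.symm E.nj4.symm K0 (E.hc K hK F hF)
    have c4 := E.c4 F hF
    have ad3 := E.ad3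
    have Fj : F j ≠ 0 := by unfold an at *; grind
    have F3 : F q3 ≠ 0 := by unfold an at *; grind
    have W : ∀ m, m ≠ q2 → m ≠ q3 → m ≠ j → F m = 0 := fun m h1 h2 h3 => 
      E.w4 F hF q2 q3 j m E.n23 E.nj2.symm h1.symm E.nj3.symm h2.symm h3.symm 
      (by rw [hx]; exact E.h2.2.1) F3 Fj
    have Fi := W i E.ni2 E.ni3 hij
    have cK := com3 F H q2 q3 j E.n23 E.nj2.symm E.nj3.symm W (E.hc F hF H hH)
    unfold an at *; grind
  · obtain ⟨y3, y4, y0⟩ := E.tY F hF hy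
    have cy := com3 F H q2 q3 q4 E.n23 E.n24 E.n34 y0 (E.hc F hF H hH)
    unfold an at *; grind

lemma EG.eps {S : Set (PauliT ι)} {a b v w : PauliT ι} {q2 q3 q4 i j : ι}
    (E : EG S a b v w q2 q3 q4 i j) {H K : PauliT ι} (hH : H ∈ S) (hK : K ∈ S)
    (H2 : H q2 = 0) (H3 : H q3 = a q3) (H4 : H q4 = 0) (Hi : an (H i) (w i))
    (K2 : K q2 = 0) (K3 : K q3 = 0) (K4 : K q4 = b q4) (Kj : an (K j) (v j)) : False := by
  have h2 := E.h2; have h3 := E.h3; have h4 := E.h4; have ad3 := E.ad3; have ad4 := E.ad4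
  have nY : ∀ Y ∈ S, Y q2 ≠ a q2 + b q2 := by
    intro Y hY hy
    obtain ⟨y3, y4, y0⟩ := E.tY Y hY hy
    have cy := com3 Y H q2 q3 q4 E.n23 E.n24 E.n34 y0 (E.hc Y hY H hH)
    unfold an at *; grind
  obtain ⟨F, hF, hx | hy⟩ := E.e2Z
  swap
  · exact nY F hF hy
  obtain ⟨F', hF', hz | hy⟩ := E.e2X
  swap
  · exact nY F' hF' hy
  obtain ⟨t3, t4, ti⟩ := E.tX F hF hx
  obtain ⟨z4, z3, zj⟩ := E.tZ F' hF' hz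
  obtain ⟨r, hr2, hr⟩ := comex F F' q2 (E.hc F hF F' hF') (by rw [hx, hz]; exact h2)
  have hr3 : r ≠ q3 := by rintro rfl; exact hr.1 t3
  have hr4 : r ≠ q4 := by rintro rfl; exact hr.2.1 z4
  have F4 : F q4 ≠ 0 := by unfold an at *; grind
  have F3 : F' q3 ≠ 0 := by unfold an at *; grind
  have W : ∀ m, m ≠ q2 → m ≠ q4 → m ≠ r → F m = 0 := fun m h1 h2 h3 => 
      E.w4 F hF q2 q4 r m E.n24 hr2.symm h1.symm hr4.symm h2.symm h3.symm 
      (by rw [hx]; exact E.h2.1) F4 hr.1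
  have W' : ∀ m, m ≠ q2 → m ≠ q3 → m ≠ r → F' m = 0 := fun m h1 h2 h3 => 
      E.w4 F' hF' q2 q3 r m E.n23 hr2.symm h1.symm hr3.symm h2.symm h3.symm 
      (by rw [hz]; exact E.h2.2.1) F3 hr.2.1
  have cFK := com3 F K q2 q4 r E.n24 hr2.symm hr4.symm W (E.hc F hF K hK)
  have cFH := com3 F H q2 q4 r E.n24 hr2.symm hr4.symm W (E.hc F hF H hH)
  have cZK := com3 F' K q2 q3 r E.n23 hr2.symm hr3.symm W' (E.hc F' hF' K hK)
  have cZH := com3 F' H q2 q3 r E.n23 hr2.symm hr3.symm W' (E.hc F' hF' H hH)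
  have Hr : H r = F r := by unfold an at *; grind
  have Kr : K r = F' r := by unfold an at *; grind
  have hir : i ≠ r := by
    rintro rfl; unfold an at *; grind
  have hjr : j ≠ r := by
    rintro rfl; unfold an at *; grind
  have Fj := W j E.nj2 E.nj4 hjr
  have c3 := E.c3 F hF
  have F4' : F q4 = v q4 := by unfold an at *; grind
  have H0 : ∀ m, m ≠ q3 → m ≠ i → m ≠ r → H m = 0 := fun m h1 h2 h3 => 
      E.w4 H hH q3 i r m E.ni3.symm hr3.symm h1.symm hir h2.symm h3.symm 
      (by rw [H3]; exact E.h3.1) Hi.1 (by rw [Hr]; exact hr.1)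
  have K0 : ∀ m, m ≠ q4 → m ≠ j → m ≠ r → K m = 0 := fun m h1 h2 h3 => 
      E.w4 K hK q4 j r m E.nj4.symm hr4.symm h1.symm hjr h2.symm h3.symm 
      (by rw [K4]; exact E.h4.2.1) Kj.1 (by rw [Kr]; exact hr.2.1)
  have cHK := com3 H K q3 i r E.ni3.symm hr3.symm hir H0 (E.hc H hH K hK)
  have Ki : an (H i) (K i) := by unfold an at *; grind
  have hij : i = j := by
    by_contra hne
    exact Ki.2.1 (K0 i E.ni4 hne hir)
  subst hij
  have c3' := E.c3 H hH
  have hvj := E.hvj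
  have Hv : H i = v i := by unfold an at *; grind
  refine E.hn F hF H hH ?_
  funext m
  simp only [Pi.add_apply]
  by_cases m2 : m = q2
  · subst m2; rw [hx, H2, E.hv _ E.n24 E.ni2.symm]
  by_cases m3 : m = q3
  · subst m3; rw [t3, H3, E.hv _ E.n34 E.ni3.symm, add_comm]
  by_cases m4 : m = q4
  · subst m4; rw [F4', H4, E.ha _ m2 m3, add_comm]
  by_cases mi : m = i
  · subst mi; rw [Fj, Hv, E.ha _ m2 m3]
  by_cases mr : m = r
  · subst mr; rw [Hr, self_add, E.ha _ m2 m3, E.hv m m4 mi, add_zero]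
  rw [W m m2 m4 mr, H0 m m3 mi mr, E.ha m m2 m3, E.hv m m4 mi]

lemma EG.alp {S : Set (PauliT ι)} {a b v w : PauliT ι} {q2 q3 q4 i j : ι}
    (E : EG S a b v w q2 q3 q4 i j) {H K : PauliT ι} (hH : H ∈ S) (hK : K ∈ S)
    (H2 : H q2 = b q2) (H3 : H q3 = a q3 + w q3) (H4 : H q4 = 0) (Hi : an (H i) (w i))
    (H0 : ∀ m, m ≠ q2 → m ≠ q3 → m ≠ i → H m = 0)
    (K2 : K q2 = a q2) (K4 : K q4 = v q4 + b q4) (K3 : K q3 = 0) (Kj : an (K j) (v j))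
    (K0 : ∀ m, m ≠ q2 → m ≠ q4 → m ≠ j → K m = 0) : False := by
  have h2 := E.h2; have h3 := E.h3; have h4 := E.h4; have ad3 := E.ad3; have ad4 := E.ad4
  have cHK := com3 H K q2 q3 i E.n23 E.ni2.symm E.ni3.symm H0 (E.hc H hH K hK)
  have Ki : an (H i) (K i) := by unfold an at *; grind
  have hij : i = j := by
    by_contra hne
    exact Ki.2.1 (K0 i E.ni2 E.ni4 hne)
  subst hij
  have tz := (E.tZ H hH H2).2.2
  have tx := (E.tX K hK K2).2.2
  have hvj := E.hvj; have hwi := E.hwi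
  have Hv : H i = v i := by unfold an at *; grind
  have Kw : K i = w i := by unfold an at *; grind
  let y : PauliT ι := fun m => if m = q3 then a q3 else if m = i then w i else 0
  have y3 : y q3 = a q3 := by simp [y]
  have yi : y i = w i := by simp [y, E.ni3]
  have y0 : ∀ m, m ≠ q3 → m ≠ i → y m = 0 := by
    intro m h1 h2; simp [y, h1, h2]
  have sy := fun X => symp2 y X q3 i E.ni3.symm y0
  have ya : sympl y a = 0 := by
    rw [sy, y3, lf_self, E.ha i E.ni2 E.ni3, lf_zero_right, add_zero]
  have yb : sympl y b = 0 := by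
    rw [sy, E.hb i E.ni2 E.ni4, E.hb q3 E.n23.symm E.n34, lf_zero_right, lf_zero_right, add_zero]
  have yv : sympl y v = 1 := by
    rw [sy, E.hv q3 E.n34 E.ni3.symm, lf_zero_right, zero_add, yi, lf_an]
    rw [Hv] at Hi
    exact ⟨hwi, hvj, Hi.2.2.symm⟩
  obtain ⟨M, hM, hyM⟩ : ∃ M ∈ S, sympl y M ≠ 0 := by
    by_contra hc
    push Not at hc
    have := E.hC y y0 hc ya yb
    rw [this] at yv
    exact absurd yv (by decide)
  have hyM' : ¬ (an (a q3) (M q3) ↔ an (w i) (M i)) := by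
    rw [sy, y3, yi] at hyM
    rw [← lf_an, ← lf_an]
    revert hyM
    generalize lf _ _ = c
    generalize lf _ _ = d
    revert c d; decide
  rcases E.fr2 (M q2) with hm | hm | hm | hm
  · have c1 := E.c1 M hM; have c2 := E.c2 M hM; have c3 := E.c3 M hM; have c4 := E.c4 M hM
    have cc := com3 H M q2 q3 i E.n23 E.ni2.symm E.ni3.symm H0 (E.hc H hH M hM)
    have M3 : M q3 = a q3 := by unfold an at *; grind
    have Mw : an (M i) (w i) := by unfold an at *; grind
    have Mv : an (M i) (v i) := by unfold an at *; grind
    have M4 : M q4 = b q4 := by unfold an at *; grind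
    refine E.delta hM ⟨hm, M3, M4, rfl, Mv, Mw, fun m h1 h2 h3 => 
      E.w4 M hM q3 q4 i m E.n34 E.ni3.symm h1.symm E.ni4.symm h2.symm h3.symm ?_ ?_ Mv.1⟩
    · rw [M3]; exact E.h3.1
    · rw [M4]; exact E.h4.2.1
  · obtain ⟨t3, t4, ti⟩ := E.tX M hM hm
    unfold an at *; grind
  · obtain ⟨t4, t3, ti⟩ := E.tZ M hM hm
    have cc := com3 K M q2 q4 i E.n24 E.ni2.symm E.ni4.symm K0 (E.hc K hK M hM)
    unfold an at *; grind
  · obtain ⟨t3, t4, t0⟩ := E.tY M hM hm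
    refine E.hn H hH M hM ?_
    funext m
    simp only [Pi.add_apply]
    by_cases m2 : m = q2
    · subst m2; rw [H2, hm, E.hv _ E.n24 E.ni2.symm, add_comm (b m), L_cancel, add_zero]
    by_cases m3 : m = q3
    · subst m3; rw [H3, t3, E.hv _ E.n34 E.ni3.symm, L_cancel, add_zero]
    by_cases m4 : m = q4
    · subst m4; rw [H4, t4, E.ha _ m2 m3]
    by_cases mi : m = i
    · subst mi; rw [Hv, E.ha _ m2 m3, t0 m m2 m3 m4, add_comm]
    rw [H0 m m2 m3 mi, t0 m m2 m3 m4, E.ha m m2 m3, E.hv m m4 mi]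

lemma EG.false {S : Set (PauliT ι)} {a b v w : PauliT ι} {q2 q3 q4 i j : ι}
    (E : EG S a b v w q2 q3 q4 i j) : False := by
  obtain ⟨H, hH, h⟩ := E.e3
  obtain ⟨K, hK, k⟩ := E.e4
  obtain ⟨Hi, h⟩ := E.tH H hH h
  obtain ⟨Kj, k⟩ := E.tK K hK k
  rcases h with ⟨H2, H3, H4, H0⟩ | ⟨H2, H3, H4, hij, Hv, H0⟩ | ⟨H2, H3, H4⟩
  · rcases k with ⟨K2, K4, K3, K0⟩ | ⟨K2, K3, K3', K4⟩ | ⟨K2, K3, K4⟩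
    · exact E.alp hH hK H2 H3 H4 Hi H0 K2 K4 K3 Kj K0
    · obtain ⟨Ki, k⟩ := E.tH K hK K3'
      have h4 := E.h4
      have h3 := E.ad3
      rcases k with ⟨-, -, k, -⟩ | ⟨k2, k3, k4, hij, Kv, K0⟩ | ⟨-, -, k⟩
      · rw [K4] at k; exact h4.2.1 k
      · exact E.delta hK ⟨k2, k3, k4, hij, Kv, Ki, K0⟩
      · rw [K4] at k; exact h4.2.1 k
    · exact E.gam hH hK H2 H3 H4 Hi H0 K2 K3 K4 Kj
  · exact E.delta hH ⟨H2, H3, H4, hij, Hv, Hi, H0⟩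
  · rcases k with ⟨K2, K4, K3, K0⟩ | ⟨K2, K3, K3', K4⟩ | ⟨K2, K3, K4⟩
    · exact E.gam' hH hK H2 H3 H4 Hi K2 K4 K3 Kj K0
    · obtain ⟨Ki, k⟩ := E.tH K hK K3'
      have h4 := E.h4
      rcases k with ⟨-, -, k, -⟩ | ⟨k2, k3, k4, hij, Kv, K0⟩ | ⟨-, -, k⟩
      · rw [K4] at k; exact h4.2.1 k
      · exact E.delta hK ⟨k2, k3, k4, hij, Kv, Ki, K0⟩
      · rw [K4] at k; exact h4.2.1 k
    · exact E.eps hH hK H2 H3 H4 Hi K2 K3 K4 Kj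

/-- zeroing one coordinate -/
def er (q : ι) : PauliT ι →ₗ[ZMod 2] PauliT ι where
  toFun v := fun i => if i = q then 0 else v i
  map_add' u v := by funext i; by_cases h : i = q <;> simp [h]
  map_smul' c v := by funext i; by_cases h : i = q <;> simp [h]

lemma er_self (q : ι) (v : PauliT ι) : er q v q = 0 := by simp [er]
lemma er_ne (q : ι) (v : PauliT ι) (i : ι) (h : i ≠ q) : er q v i = v i := by simp [er, h]
lemma er_id (q : ι) (v : PauliT ι) (h : v q = 0) : er q v = v := by
  funext i
  by_cases hi : i = q
  · subst hi; rw [er_self, h]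
  · exact er_ne q v i hi
lemma er_single (q : ι) (p : ZMod 2 × ZMod 2) : er q (Pi.single q p : PauliT ι) = 0 := by
  funext i
  by_cases hi : i = q
  · subst hi; rw [er_self]; rfl
  · rw [er_ne q _ i hi, Pi.single_eq_of_ne hi]; rfl
lemma er_dec (q : ι) (v : PauliT ι) : v = er q v + Pi.single q (v q) := by
  funext i
  by_cases hi : i = q
  · subst hi; simp [er_self]
  · simp [er_ne q v i hi, Pi.single_eq_of_ne hi]

lemma sympl_er (q : ι) (u v : PauliT ι) :
    sympl u v = lf (u q) (v q) + sympl (er q u) (er q v) := by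
  rw [sympl_eq, sympl_eq, ← Finset.add_sum_erase _ _ (Finset.mem_univ q),
    ← Finset.add_sum_erase (s := Finset.univ) (f := fun i => lf (er q u i) (er q v i))
      (Finset.mem_univ q)]
  rw [er_self, lf_zero_left, zero_add]
  congr 1
  refine Finset.sum_congr rfl fun i hi => ?_
  have := Finset.ne_of_mem_erase hi
  rw [er_ne q u i this, er_ne q v i this]

lemma wt_le_of (F H : PauliT ι) (h : ∀ i, F i ≠ 0 → H i ≠ 0) : wt F ≤ wt H := by
  unfold wt
  exact Finset.card_le_card fun i hi => by
    simp only [Finset.mem_filter, Finset.mem_univ, true_and] at hi ⊢; exact h i hi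

lemma wt_er_le (q : ι) (v : PauliT ι) : wt (er q v) ≤ wt v := by
  refine wt_le_of _ _ fun i hi => ?_
  by_cases h : i = q
  · subst h; exact absurd (er_self _ _) hi
  · rwa [er_ne q v i h] at hi

lemma wt_er_lt (q : ι) (v : PauliT ι) (hq : v q ≠ 0) : wt (er q v) < wt v := by
  unfold wt
  refine Finset.card_lt_card ⟨fun i hi => ?_, fun hs => ?_⟩
  · simp only [Finset.mem_filter, Finset.mem_univ, true_and] at hi ⊢
    by_cases h : i = q
    · subst h; exact hq
    · rwa [er_ne q v i h] at hi
  · have : q ∈ Finset.univ.filter fun i => er q v i ≠ 0 := hs (by simp [hq])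
    simp [er_self] at this

lemma wt_add_le (F H : PauliT ι) : wt (F + H) ≤ wt F + wt H := by
  unfold wt
  refine (Finset.card_le_card ?_).trans (Finset.card_union_le _ _)
  intro i hi
  simp only [Finset.mem_union, Finset.mem_filter, Finset.mem_univ, true_and, Pi.add_apply] at hi ⊢
  by_contra hc
  push Not at hc
  rw [hc.1, hc.2] at hi; simp at hi

lemma wt_single (q : ι) (p : ZMod 2 × ZMod 2) : wt (Pi.single q p : PauliT ι) ≤ 1 := by
  unfold wt
  rw [Finset.card_le_one]
  intro i hi j hj
  simp only [Finset.mem_filter, Finset.mem_univ, true_and] at hi hj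
  have : ∀ i, (Pi.single q p : PauliT ι) i ≠ 0 → i = q := by
    intro i hi; by_contra hc; exact hi (Pi.single_eq_of_ne hc _)
  rw [this i hi, this j hj]

lemma supp2 (F : PauliT ι) (p q : ι) (hpq : p ≠ q) (hp : F p ≠ 0) (hq : F q ≠ 0) (h : wt F ≤ 2) :
    ∀ m, m ≠ p → m ≠ q → F m = 0 := by
  intro m mp mq
  by_contra hm
  have h1 := wt_er_lt p F hp
  have h2 := wt_er_lt q (er p F) (by rw [er_ne p F q hpq.symm]; exact hq)
  have h3 := wt_er_lt m (er q (er p F)) (by rw [er_ne _ _ _ mq, er_ne _ _ _ mp]; exact hm)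
  omega

lemma exj (F : PauliT ι) (p : ι) (h : 2 ≤ wt F) : ∃ j, j ≠ p ∧ F j ≠ 0 := by
  by_contra hc
  push Not at hc
  have : F = Pi.single p (F p) := by
    funext i
    by_cases hi : i = p
    · subst hi; simp
    · rw [hc i hi, Pi.single_eq_of_ne hi]
  have h1 := wt_single p (F p)
  rw [← this] at h1
  omega

lemma disj_of (v a : PauliT ι) (hv : wt v ≤ 2) (ha : wt a ≤ 2) (hc : sympl v a = 0)
    (h : 3 ≤ wt (v + a)) (q : ι) : v q = 0 ∨ a q = 0 := by
  by_contra hh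
  push Not at hh
  by_cases han : an (v q) (a q)
  · obtain ⟨r, hr, har⟩ := comex v a q hc han
    have s1 := supp2 v q r hr.symm hh.1 har.1 hv
    have s2 := supp2 a q r hr.symm hh.2 har.2.1 ha
    have := wt_two (v + a) q r fun m h1 h2 => by rw [Pi.add_apply, s1 m h1 h2, s2 m h1 h2, add_zero]
    omega
  · have heq : v q = a q := by
      by_contra hne; exact han ⟨hh.1, hh.2, hne⟩
    have h0 : v + a = er q v + er q a := by
      rw [← map_add, er_id]
      rw [Pi.add_apply, heq, self_add]
    rw [h0] at h
    have := wt_add_le (er q v) (er q a)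
    have := wt_er_lt q v hh.1
    have := wt_er_lt q a hh.2
    omega

/-- the statement proved by induction -/
def Good (T : Finset ι) : Prop :=
  ∀ S : Finset (PauliT ι), (∀ s ∈ S, ∀ i ∉ T, s i = 0) → (∀ s ∈ S, ∀ t ∈ S, sympl s t = 0) →
    (∀ s ∈ S, wt s ≤ 3) → S.card < T.card →
    ∃ v : PauliT ι, (∀ i ∉ T, v i = 0) ∧ (∀ s ∈ S, sympl v s = 0) ∧
      v ∉ Submodule.span (ZMod 2) (S : Set (PauliT ι)) ∧ wt v ≤ 2

lemma exch (x : PauliT ι) (hx : x ≠ 0) (S : Finset (PauliT ι))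
    (h : x ∈ Submodule.span (ZMod 2) (S : Set (PauliT ι))) :
    ∃ A ∈ S, A ∈ Submodule.span (ZMod 2) (insert x (S.erase A : Set (PauliT ι))) := by
  induction S using Finset.induction_on with
  | empty => simp at h; exact absurd h hx
  | insert A S0 hA ih =>
    by_cases h0 : x ∈ Submodule.span (ZMod 2) (S0 : Set (PauliT ι))
    · obtain ⟨B, hB, hB2⟩ := ih h0
      refine ⟨B, Finset.mem_insert_of_mem hB, Submodule.span_mono ?_ hB2⟩
      refine Set.insert_subset_insert ?_
      intro y hy
      simp only [Finset.coe_erase, Finset.coe_insert, Set.mem_sdiff, Set.mem_insert_iff, Finset.mem_coe] at hy ⊢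
      exact ⟨Or.inr hy.1, hy.2⟩
    · refine ⟨A, Finset.mem_insert_self _ _, ?_⟩
      rw [Finset.erase_insert hA]
      rw [Finset.coe_insert] at h
      exact mem_span_insert_exchange h h0

lemma lf_comm_zero (s t p : ZMod 2 × ZMod 2) (hp : p ≠ 0) (h1 : lf s p = 0) (h2 : lf t p = 0) :
    lf s t = 0 := by
  revert s t p; unfold lf; decide

lemma split_step (T : Finset ι) (q : ι) (hq : q ∈ T) (IH : Good (T.erase q))
    (S : Finset (PauliT ι)) (hT : ∀ s ∈ S, ∀ i ∉ T, s i = 0)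
    (hc : ∀ s ∈ S, ∀ t ∈ S, sympl s t = 0) (hw : ∀ s ∈ S, wt s ≤ 3) (hcard : S.card < T.card)
    (p : ZMod 2 × ZMod 2) (hp : p ≠ 0)
    (hx : (Pi.single q p : PauliT ι) ∈ Submodule.span (ZMod 2) (S : Set (PauliT ι))) :
    ∃ v : PauliT ι, (∀ i ∉ T, v i = 0) ∧ (∀ s ∈ S, sympl v s = 0) ∧
      v ∉ Submodule.span (ZMod 2) (S : Set (PauliT ι)) ∧ wt v ≤ 2 := by
  have hx0 : (Pi.single q p : PauliT ι) ≠ 0 := by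
    intro h; apply hp; simpa using congrFun h q
  obtain ⟨A, hA, hA2⟩ := exch _ hx0 S hx
  have hl : ∀ s ∈ S, lf (s q) p = 0 := by
    intro s hs
    rw [lf_comm, ← sympl_single, sympl_comm]
    exact sympl_span _ _ (fun t ht => hc s hs t ht) _ hx
  have hcomm : ∀ s ∈ S, ∀ t ∈ S, sympl (er q s) (er q t) = 0 := by
    intro s hs t ht
    have := sympl_er q s t
    rw [hc s hs t ht, lf_comm_zero _ _ p hp (hl s hs) (hl t ht), zero_add] at this
    exact this.symm
  obtain ⟨v, v1, v2, v3, v4⟩ := IH ((S.erase A).image (er q)) (by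
      intro s hs i hi
      obtain ⟨t, ht, rfl⟩ := Finset.mem_image.1 hs
      by_cases h : i = q
      · subst h; exact er_self _ _
      · rw [er_ne _ _ _ h]
        exact hT t (Finset.mem_of_mem_erase ht) i fun hiT => hi (Finset.mem_erase.2 ⟨h, hiT⟩))
    (by
      intro s hs t ht
      obtain ⟨s, hs', rfl⟩ := Finset.mem_image.1 hs
      obtain ⟨t, ht', rfl⟩ := Finset.mem_image.1 ht
      exact hcomm s (Finset.mem_of_mem_erase hs') t (Finset.mem_of_mem_erase ht'))
    (by
      intro s hs
      obtain ⟨s, hs', rfl⟩ := Finset.mem_image.1 hs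
      exact (wt_er_le q s).trans (hw s (Finset.mem_of_mem_erase hs')))
    (by
      refine lt_of_le_of_lt Finset.card_image_le ?_
      rw [Finset.card_erase_of_mem hA, Finset.card_erase_of_mem hq]
      have := Finset.card_pos.2 ⟨A, hA⟩
      omega)
  have vq : v q = 0 := v1 q (Finset.notMem_erase q T)
  have hvs : ∀ s, s ∈ insert (Pi.single q p : PauliT ι) (S.erase A : Set (PauliT ι)) →
      sympl v s = 0 := by
    intro s hs
    rcases hs with rfl | hs
    · rw [sympl_comm, sympl_single, vq, lf_zero_right]
    · rw [sympl_er q, vq, lf_zero_left, zero_add, er_id q v vq]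
      exact v2 _ (Finset.mem_image_of_mem _ hs)
  have hsub : (S : Set (PauliT ι)) ⊆
      Submodule.span (ZMod 2) (insert (Pi.single q p : PauliT ι) (S.erase A : Set (PauliT ι))) := by
    intro s hs
    by_cases h : s = A
    · subst h; exact hA2
    · exact Submodule.subset_span (Or.inr (Finset.mem_coe.2 (Finset.mem_erase.2 ⟨h, hs⟩)))
  refine ⟨v, fun i hi => v1 i fun h => hi (Finset.mem_of_mem_erase h), ?_, ?_, v4⟩
  · intro s hs
    exact sympl_span _ _ hvs _ (hsub hs)
  · intro hv
    apply v3
    have h1 := Submodule.span_le.2 hsub hv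
    have h2 := Submodule.mem_map_of_mem (f := er q) h1
    rw [er_id q v vq, Submodule.map_span, Set.image_insert_eq, er_single,
      Submodule.span_insert_zero] at h2
    rw [Finset.coe_image]
    exact h2

lemma coef_eq (x z : ZMod 2 × ZMod 2) (h : an x z) (c d e f : ZMod 2)
    (he : c • x + d • z = e • x + f • z) : c = e ∧ d = f := by
  unfold an at h; revert x z c d e f; decide

lemma add_self' (x : PauliT ι) : x + x = 0 := by
  funext i; exact self_add _

lemma zm_add_self (c : ZMod 2) : c + c = 0 := by revert c; decide

lemma stepK (T : Finset ι) (S' : Set (PauliT ι)) (A B : PauliT ι) (q : ι) (hq : q ∈ T)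
    (hz : ∀ s ∈ S', s q = 0) (hAB : an (A q) (B q))
    (H : ∀ v : PauliT ι, (∀ i ∉ T, v i = 0) → sympl v A = 0 → sympl v B = 0 →
      (∀ s ∈ S', sympl v s = 0) → wt v ≤ 2 →
      v ∈ Submodule.span (ZMod 2) (insert A (insert B S')))
    (y : PauliT ι) (yq : y q = 0) (yT : ∀ i ∉ T, y i = 0) (yS : ∀ s ∈ S', sympl y s = 0)
    (hw : wt y ≤ 1 ∨ (wt y ≤ 2 ∧ sympl y (er q A) = 0 ∧ sympl y (er q B) = 0)) :
    y + (sympl y (er q B) • er q A + sympl y (er q A) • er q B) ∈ Submodule.span (ZMod 2) S' := by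
  set α := sympl y (er q B) with hα
  set β := sympl y (er q A) with hβ
  have yA : sympl y A = β := by rw [sympl_er q, yq, lf_zero_left, zero_add, er_id q y yq]
  have yB : sympl y B = α := by rw [sympl_er q, yq, lf_zero_left, zero_add, er_id q y yq]
  have lAB : lf (A q) (B q) = 1 := (lf_an _ _).2 hAB
  have hE := H (y + Pi.single q (α • A q + β • B q))
    (by
      intro i hi
      have : i ≠ q := fun h => hi (h ▸ hq)
      rw [Pi.add_apply, yT i hi, Pi.single_eq_of_ne this, add_zero])
    (by
      rw [sympl_add_left, sympl_single, yA, lf_add_left, lf_smul_left, lf_smul_left, lf_self,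
        lf_comm (B q), lAB, mul_zero, mul_one, zero_add, zm_add_self])
    (by
      rw [sympl_add_left, sympl_single, yB, lf_add_left, lf_smul_left, lf_smul_left, lf_self,
        lAB, mul_zero, mul_one, add_zero, zm_add_self])
    (by
      intro s hs
      rw [sympl_add_left, sympl_single, hz s hs, lf_zero_right, yS s hs, add_zero])
    (by
      rcases hw with hw | ⟨hw, h1, h2⟩
      · have := wt_add_le y (Pi.single q (α • A q + β • B q))
        have := wt_single q (α • A q + β • B q)
        omega
      · rw [h1, h2]; simpa using hw)
  obtain ⟨e, g1, hg1, hE⟩ := Submodule.mem_span_insert.1 hE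
  obtain ⟨f, g, hg, rfl⟩ := Submodule.mem_span_insert.1 hg1
  have gq : g q = 0 := by
    clear hE hg1
    induction hg using Submodule.span_induction with
    | mem x hx => exact hz x hx
    | zero => rfl
    | add x y _ _ hx hy => rw [Pi.add_apply, hx, hy, add_zero]
    | smul c x _ hx => rw [Pi.smul_apply, hx, smul_zero]
  have hqq := congrFun hE q
  simp only [Pi.add_apply, yq, gq, Pi.single_eq_same, zero_add, add_zero, Pi.smul_apply] at hqq
  obtain ⟨h1, h2⟩ := coef_eq _ _ hAB _ _ _ _ hqq
  have h3 := congrArg (er q) hE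
  rw [map_add, er_single, add_zero, map_add, map_add, map_smul, map_smul, er_id q y yq,
    er_id q g gq, ← h1, ← h2] at h3
  have : y + (α • er q A + β • er q B) = g := by
    conv_lhs => rw [h3]
    have := add_self' (α • er q A + β • er q B)
    calc _ = g + ((α • er q A + β • er q B) + (α • er q A + β • er q B)) := by abel
      _ = g := by rw [this, add_zero]
  rw [this]; exact hg

lemma stepV (T : Finset ι) (S' : Finset (PauliT ι)) (a b : PauliT ι) (q : ι)
    (IH : Good (T.erase q)) (hab : sympl a b = 1) (haq : a q = 0) (haT : ∀ i ∉ T, a i = 0)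
    (hST : ∀ s ∈ S', ∀ i ∉ T, s i = 0) (hSq : ∀ s ∈ S', s q = 0)
    (hc : ∀ s ∈ S', ∀ t ∈ S', sympl s t = 0) (hSa : ∀ s ∈ S', sympl s a = 0)
    (hSb : ∀ s ∈ S', sympl s b = 0)
    (hw : ∀ s ∈ S', wt s ≤ 3) (hwa : wt a ≤ 2) (hcard : S'.card + 1 < (T.erase q).card)
    (hK : ∀ y : PauliT ι, y q = 0 → (∀ i ∉ T, y i = 0) → (∀ s ∈ S', sympl y s = 0) →
      (wt y ≤ 1 ∨ (wt y ≤ 2 ∧ sympl y a = 0 ∧ sympl y b = 0)) →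
      y + (sympl y b • a + sympl y a • b) ∈ Submodule.span (ZMod 2) (S' : Set (PauliT ι))) :
    ∃ v : PauliT ι, v q = 0 ∧ (∀ i ∉ T, v i = 0) ∧ (∀ s ∈ S', sympl v s = 0) ∧ sympl v a = 0 ∧
      sympl v b = 1 ∧ wt v = 2 ∧ (∀ m, v m = 0 ∨ a m = 0) ∧
      v ∉ Submodule.span (ZMod 2) (insert a (S' : Set (PauliT ι))) := by
  obtain ⟨v, v1, v2, v3, v4⟩ := IH (insert a S')
    (by
      intro s hs i hi
      have key : ∀ s : PauliT ι, s q = 0 → (∀ i ∉ T, s i = 0) → s i = 0 := by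
        intro s h1 h2
        by_cases h : i = q
        · rw [h, h1]
        · exact h2 i fun h' => hi (Finset.mem_erase.2 ⟨h, h'⟩)
      rcases Finset.mem_insert.1 hs with rfl | hs
      · exact key _ haq haT
      · exact key s (hSq s hs) (hST s hs))
    (by
      intro s hs t ht
      rcases Finset.mem_insert.1 hs with rfl | hs' <;>
        rcases Finset.mem_insert.1 ht with rfl | ht'
      · exact sympl_self _
      · rw [sympl_comm]; exact hSa t ht'
      · exact hSa s hs'
      · exact hc s hs' t ht')
    (by
      intro s hs
      rcases Finset.mem_insert.1 hs with rfl | hs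
      · omega
      · exact hw s hs)
    (lt_of_le_of_lt (Finset.card_insert_le _ _) hcard)
  rw [Finset.coe_insert] at v3
  have vq : v q = 0 := v1 q (Finset.notMem_erase q T)
  have vT : ∀ i ∉ T, v i = 0 := fun i hi => v1 i fun h => hi (Finset.mem_of_mem_erase h)
  have vS : ∀ s ∈ S', sympl v s = 0 := fun s hs => v2 s (Finset.mem_insert_of_mem hs)
  have va : sympl v a = 0 := v2 a (Finset.mem_insert_self _ _)
  have hmono : Submodule.span (ZMod 2) (S' : Set (PauliT ι)) ≤
      Submodule.span (ZMod 2) (insert a (S' : Set (PauliT ι))) :=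
    Submodule.span_mono (Set.subset_insert _ _)
  have hamem : a ∈ Submodule.span (ZMod 2) (insert a (S' : Set (PauliT ι))) :=
    Submodule.subset_span (Set.mem_insert _ _)
  have vb : sympl v b = 1 := by
    rcases zm2 (sympl v b) with h | h
    · have := hK v vq vT vS (Or.inr ⟨v4, va, h⟩)
      rw [va, h, zero_smul, zero_smul, add_zero, add_zero] at this
      exact absurd (hmono this) v3
    · exact h
  have notva : v + a ∉ Submodule.span (ZMod 2) (S' : Set (PauliT ι)) := by
    intro h
    have := Submodule.sub_mem _ (hmono h) hamem
    rw [add_sub_cancel_right] at this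
    exact v3 this
  have w2 : wt v = 2 := by
    by_contra hne
    have := hK v vq vT vS (Or.inl (by omega))
    rw [va, vb, zero_smul, one_smul, add_zero] at this
    exact notva this
  have w3 : 3 ≤ wt (v + a) := by
    by_contra hlt
    have h1 : sympl (v + a) a = 0 := by rw [sympl_add_left, va, sympl_self, add_zero]
    have h2 : sympl (v + a) b = 0 := by rw [sympl_add_left, vb, hab, zm_add_self]
    have := hK (v + a) (by rw [Pi.add_apply, vq, haq, add_zero])
      (fun i hi => by rw [Pi.add_apply, vT i hi, haT i hi, add_zero])
      (fun s hs => by rw [sympl_add_left, vS s hs, sympl_comm a, hSa s hs, add_zero])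
      (Or.inr ⟨by omega, h1, h2⟩)
    rw [h1, h2, zero_smul, zero_smul, add_zero, add_zero] at this
    exact notva this
  exact ⟨v, vq, vT, vS, va, vb, w2, disj_of v a v4 hwa va w3, v3⟩

lemma exan (u v : PauliT ι) (h : sympl u v = 1) : ∃ q, an (u q) (v q) := by
  by_contra hc
  push Not at hc
  rw [sympl_eq, Finset.sum_eq_zero] at h
  · exact absurd h (by decide)
  · intro i _; rw [lf_an0]; exact hc i

lemma stepF (T : Finset ι) (S' : Finset (PauliT ι)) (a b : PauliT ι) (q q2 : ι)
    (IH : Good (T.erase q)) (hab : sympl a b = 1) (haq : a q = 0) (haT : ∀ i ∉ T, a i = 0)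
    (hbq : b q = 0) (hbT : ∀ i ∉ T, b i = 0) (hq2 : an (a q2) (b q2))
    (hST : ∀ s ∈ S', ∀ i ∉ T, s i = 0) (hSq : ∀ s ∈ S', s q = 0)
    (hc : ∀ s ∈ S', ∀ t ∈ S', sympl s t = 0) (hSa : ∀ s ∈ S', sympl s a = 0)
    (hSb : ∀ s ∈ S', sympl s b = 0)
    (hw : ∀ s ∈ S', wt s ≤ 3) (hwa : wt a ≤ 2) (hwb : wt b ≤ 2)
    (hcard : S'.card + 1 < (T.erase q).card)
    (hK : ∀ y : PauliT ι, y q = 0 → (∀ i ∉ T, y i = 0) → (∀ s ∈ S', sympl y s = 0) →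
      (wt y ≤ 1 ∨ (wt y ≤ 2 ∧ sympl y a = 0 ∧ sympl y b = 0)) →
      y + (sympl y b • a + sympl y a • b) ∈ Submodule.span (ZMod 2) (S' : Set (PauliT ι))) :
    False := by
  obtain ⟨v, vq, vT, vS, va, vb, v2, vd, vn⟩ :=
    stepV T S' a b q IH hab haq haT hST hSq hc hSa hSb hw hwa hcard hK
  obtain ⟨w, wq, wT, wS, wb, wa, w2, wd, wn⟩ :=
    stepV T S' b a q IH (by rw [sympl_comm]; exact hab) hbq hbT hST hSq hc hSb hSa hw hwb hcard
      (by
        intro y h1 h2 h3 h4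
        rw [add_comm (sympl y a • b)]
        exact hK y h1 h2 h3 (h4.imp id fun h => ⟨h.1, h.2.2, h.2.1⟩))
  obtain ⟨q4, h4⟩ := exan v b vb
  obtain ⟨q3, h3⟩ := exan a w (by rw [sympl_comm]; exact wa)
  obtain ⟨j, nj4, hvj⟩ := exj v q4 v2.ge
  obtain ⟨i, ni3, hwi⟩ := exj w q3 w2.ge
  have a4 : a q4 = 0 := (vd q4).resolve_left h4.1
  have aj : a j = 0 := (vd j).resolve_left hvj
  have b3 : b q3 = 0 := (wd q3).resolve_left h3.2.1
  have bi : b i = 0 := (wd i).resolve_left hwi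
  have n23 : q2 ≠ q3 := by rintro rfl; exact hq2.2.1 b3
  have n24 : q2 ≠ q4 := by rintro rfl; exact hq2.1 a4
  have n34 : q3 ≠ q4 := by rintro rfl; exact h3.1 a4
  -- the consequence of the completeness property
  have C : ∀ y : PauliT ι, y q = 0 → (∀ i ∉ T, y i = 0) → (∀ s ∈ S', sympl y s = 0) →
      (wt y ≤ 1 ∨ (wt y ≤ 2 ∧ sympl y a = 0 ∧ sympl y b = 0)) →
      sympl y v = sympl y a ∧ sympl y w = sympl y b := by
    intro y y1 y2 y3 y4
    have hk := hK y y1 y2 y3 y4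
    have k1 := sympl_span _ v vS _ hk
    have k2 := sympl_span _ w wS _ hk
    rw [sympl_add_right, sympl_add_right, sympl_smul_right, sympl_smul_right, va, vb, mul_zero,
      mul_one, zero_add, sympl_comm v y] at k1
    rw [sympl_add_right, sympl_add_right, sympl_smul_right, sympl_smul_right, wa, wb, mul_zero,
      mul_one, add_zero, sympl_comm w y] at k2
    have z : ∀ c d : ZMod 2, c + d = 0 → c = d := by decide
    exact ⟨z _ _ k1, z _ _ k2⟩
  have hmT : ∀ (u : PauliT ι), u q = 0 → (∀ i ∉ T, u i = 0) → ∀ m, u m ≠ 0 → m ≠ q ∧ m ∈ T := by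
    intro u h1 h2 m hm
    refine ⟨fun h => hm (h ▸ h1), ?_⟩
    by_contra hc; exact hm (h2 m hc)
  have C1 : ∀ m t, m ≠ q → m ∈ T → (∀ s ∈ S', ¬ an (s m) t) →
      lf t (v m) = lf t (a m) ∧ lf t (w m) = lf t (b m) := by
    intro m t m1 m2 m3
    have := C (Pi.single m t) (Pi.single_eq_of_ne m1.symm _)
      (fun i hi => Pi.single_eq_of_ne (fun h : i = m => hi (h ▸ m2)) _)
      (fun s hs => by rw [sympl_single, lf_comm, lf_an0]; exact m3 s hs) (Or.inl (wt_single _ _))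
    simpa only [sympl_single] using this
  have sa := supp2 a q2 q3 n23 hq2.1 h3.1 hwa
  have sb := supp2 b q2 q4 n24 hq2.2.1 h4.2.1 hwb
  have sw := supp2 w q3 i ni3.symm h3.2.1 hwi w2.le
  have l0 := lf_zero_right
  refine (EG.false (S := S') (a := a) (b := b) (v := v) (w := w) (q2 := q2) (q3 := q3) (q4 := q4)
    (i := i) (j := j) ⟨n23, n24, n34, ?_, ni3, ?_, ?_, ?_, nj4, sa, sb,
      supp2 v q4 j nj4.symm h4.1 hvj v2.le, sw, hq2, h3, h4, hvj, hwi, hw, hc, hSa, hSb,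
      fun F hF => by rw [sympl_comm]; exact vS F hF, fun F hF => by rw [sympl_comm]; exact wS F hF,
      ?_, ?_, ?_, ?_, ?_⟩)
  · rintro rfl; exact hq2.2.1 bi
  · rintro rfl; exact h4.2.1 bi
  · rintro rfl; exact hq2.1 aj
  · rintro rfl; exact h3.1 aj
  · intro y y0 yS ya yb
    rw [← ya]
    refine (C y ?_ ?_ yS (Or.inr ⟨wt_two y q3 i y0, ya, yb⟩)).1
    · exact y0 q (hmT w wq wT q3 h3.2.1).1.symm (hmT w wq wT i hwi).1.symm
    · intro m hm
      refine y0 m (fun h => hm (h ▸ (hmT w wq wT q3 h3.2.1).2))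
        (fun h => hm (h ▸ (hmT w wq wT i hwi).2))
  · intro t ht
    by_contra hcon
    push Not at hcon
    have hm := hmT a haq haT q2 hq2.1
    have := C1 q2 t hm.1 hm.2 hcon
    have v0 : v q2 = 0 := (vd q2).resolve_right hq2.1
    have w0 : w q2 = 0 := (wd q2).resolve_right hq2.2.1
    rw [v0, w0, l0] at this
    obtain ⟨t1, t2⟩ := this
    have t1 := (lf_an0 _ _).1 t1.symm
    have t2 := (lf_an0 _ _).1 t2.symm
    unfold an at t1 t2 hq2
    have e1 : t = a q2 := by by_contra hne; exact t1 ⟨ht, hq2.1, hne⟩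
    have e2 : t = b q2 := by by_contra hne; exact t2 ⟨ht, hq2.2.1, hne⟩
    exact hq2.2.2 (e1.symm.trans e2)
  · by_contra hcon
    push Not at hcon
    have hm := hmT a haq haT q3 h3.1
    have h := (C1 q3 (w q3) hm.1 hm.2 hcon).1
    rw [(vd q3).resolve_right h3.1, l0, lf_comm, (lf_an _ _).2 h3] at h
    exact absurd h (by decide)
  · by_contra hcon
    push Not at hcon
    have hm := hmT b hbq hbT q4 h4.2.1
    have h := (C1 q4 (v q4) hm.1 hm.2 hcon).2
    rw [(wd q4).resolve_right h4.2.1, l0, (lf_an _ _).2 h4] at h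
    exact absurd h (by decide)
  · intro F hF H hH heq
    apply vn
    have : v = F + H + a := by rw [heq, add_assoc, add_comm v a, ← add_assoc, add_self', zero_add]
    rw [this]
    refine Submodule.add_mem _ (Submodule.add_mem _ ?_ ?_) ?_ <;> apply Submodule.subset_span
    · exact Or.inr hF
    · exact Or.inr hH
    · exact Or.inl rfl

lemma low_deg (T : Finset ι) (S : Finset (PauliT ι)) (hw : ∀ s ∈ S, wt s ≤ 3)
    (hcard : S.card < T.card) : ∃ q ∈ T, (S.filter fun s => s q ≠ 0).card ≤ 2 := by
  by_contra hc
  push Not at hc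
  have h1 : ∑ q ∈ T, 3 ≤ ∑ q ∈ T, (S.filter fun s => s q ≠ 0).card :=
    Finset.sum_le_sum fun q hq => hc q hq
  have h2 : ∑ q ∈ T, (S.filter fun s => s q ≠ 0).card =
      ∑ s ∈ S, (T.filter fun q => s q ≠ 0).card :=
    Finset.sum_card_bipartiteAbove_eq_sum_card_bipartiteBelow (fun q (s : PauliT ι) => s q ≠ 0)
  have h3 : ∑ s ∈ S, (T.filter fun q => s q ≠ 0).card ≤ ∑ s ∈ S, 3 := by
    refine Finset.sum_le_sum fun s hs => le_trans (Finset.card_le_card ?_) (hw s hs)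
    exact Finset.filter_subset_filter _ (Finset.subset_univ _)
  simp only [Finset.sum_const, smul_eq_mul] at h1 h3
  omega

lemma keyA (T : Finset ι) : Good T := by
  induction hn : T.card using Nat.strong_induction_on generalizing T with
  | _ n ih =>
  subst hn
  have IH : ∀ q ∈ T, Good (T.erase q) := fun q hq =>
    ih _ (Finset.card_erase_lt_of_mem hq) _ rfl
  clear ih
  intro S hT hc hw hcard
  by_contra hcon
  push Not at hcon
  have hno : ∀ q ∈ T, ∀ p, p ≠ 0 →
      (Pi.single q p : PauliT ι) ∉ Submodule.span (ZMod 2) (S : Set (PauliT ι)) := by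
    intro q hq p hp hmem
    obtain ⟨v, h1, h2, h3, h4⟩ := split_step T q hq (IH q hq) S hT hc hw hcard p hp hmem
    have := hcon v h1 h2 h3
    omega
  have H : ∀ v : PauliT ι, (∀ i ∉ T, v i = 0) → (∀ s ∈ S, sympl v s = 0) → wt v ≤ 2 →
      v ∈ Submodule.span (ZMod 2) (S : Set (PauliT ι)) := by
    intro v h1 h2 h3
    by_contra h4
    have := hcon v h1 h2 h4
    omega
  have hex : ∀ q ∈ T, ∀ p, p ≠ 0 → ∃ s ∈ S, an (s q) p := by
    intro q hq p hp
    by_contra hne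
    push Not at hne
    refine hno q hq p hp (H _ ?_ ?_ ?_)
    · intro i hi; exact Pi.single_eq_of_ne (fun h : i = q => hi (h ▸ hq)) _
    · intro s hs; rw [sympl_single, lf_comm, lf_an0]; exact hne s hs
    · exact (wt_single q p).trans (by norm_num)
  obtain ⟨q, hq, hdeg⟩ := low_deg T S hw hcard
  obtain ⟨A, hA, hAn⟩ := hex q hq (1, 0) (by decide)
  obtain ⟨B, hB, hBn⟩ := hex q hq (A q) hAn.1
  have hAB : an (A q) (B q) := ⟨hBn.2.1, hBn.1, hBn.2.2.symm⟩
  have hne : A ≠ B := by rintro rfl; exact hAB.2.2 rfl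
  have hsub : ({A, B} : Finset (PauliT ι)) = S.filter fun s => s q ≠ 0 := by
    refine Finset.eq_of_subset_of_card_le ?_ (by rw [Finset.card_pair hne]; exact hdeg)
    intro s hs
    rw [Finset.mem_insert, Finset.mem_singleton] at hs
    rw [Finset.mem_filter]
    rcases hs with rfl | rfl
    exacts [⟨hA, hAB.1⟩, ⟨hB, hAB.2.1⟩]
  set S' := (S.erase A).erase B with hS'
  have hBm : B ∈ S.erase A := Finset.mem_erase.2 ⟨hne.symm, hB⟩
  have hSS : ∀ s ∈ S', s ∈ S := fun s hs =>
    Finset.mem_of_mem_erase (Finset.mem_of_mem_erase hs)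
  have hz : ∀ s ∈ S', s q = 0 := by
    intro s hs
    by_contra hsq
    have hm : s ∈ S.filter fun s => s q ≠ 0 := Finset.mem_filter.2 ⟨hSS s hs, hsq⟩
    rw [← hsub, Finset.mem_insert, Finset.mem_singleton] at hm
    rcases hm with rfl | rfl
    · exact Finset.ne_of_mem_erase (Finset.mem_of_mem_erase hs) rfl
    · exact Finset.ne_of_mem_erase hs rfl
  have hSeq : (S : Set (PauliT ι)) = insert A (insert B (S' : Set (PauliT ι))) := by
    rw [← Finset.coe_insert, ← Finset.coe_insert, hS', Finset.insert_erase hBm,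
      Finset.insert_erase hA]
  have hcS' : S'.card + 2 = S.card := by
    have h1 := Finset.card_erase_add_one hBm
    have h2 := Finset.card_erase_add_one hA
    rw [← hS'] at h1
    omega
  have hTe := Finset.card_erase_add_one hq
  obtain ⟨q2, hq2, han2⟩ := comex A B q (hc A hA B hB) hAB
  have erT : ∀ A ∈ S, ∀ i ∉ T, er q A i = 0 := by
    intro A hA i hi
    rw [er_ne q A i (fun h => hi (h ▸ hq)), hT A hA i hi]
  have erS : ∀ A ∈ S, ∀ s ∈ S', sympl s (er q A) = 0 := by
    intro A hA s hs
    have := sympl_er q s A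
    rw [hz s hs, lf_zero_left, zero_add, er_id q s (hz s hs), hc s (hSS s hs) A hA] at this
    exact this.symm
  have hab : sympl (er q A) (er q B) = 1 := by
    have := sympl_er q A B
    rw [hc A hA B hB, (lf_an _ _).2 hAB] at this
    revert this
    generalize sympl (er q A) (er q B) = c
    revert c; decide
  refine stepF T S' (er q A) (er q B) q q2 (IH q hq) hab (er_self _ _) (erT A hA) (er_self _ _)
    (erT B hB) (by rwa [er_ne _ _ _ hq2, er_ne _ _ _ hq2]) (fun s hs => hT s (hSS s hs)) hz
    (fun s hs t ht => hc s (hSS s hs) t (hSS t ht)) (erS A hA) (erS B hB)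
    (fun s hs => hw s (hSS s hs)) ?_ ?_ (by omega) ?_
  · have := wt_er_lt q A hAB.1
    have := hw A hA
    omega
  · have := wt_er_lt q B hAB.2.1
    have := hw B hB
    omega
  · intro y h1 h2 h3 h4
    refine stepK T S' A B q hq hz hAB ?_ y h1 h2 h3 h4
    intro v v1 v2 v3 v4 v5
    rw [← hSeq]
    refine H v v1 ?_ v5
    intro s hs
    have hs' : s ∈ (S : Set (PauliT ι)) := hs
    rw [hSeq] at hs'
    rcases hs' with rfl | rfl | hs'
    exacts [v2, v3, v4 s hs']

lemma Wgt_ge (G : Submodule (ZMod 2) (PauliT ι)) (hG : IsStabilizer G) (d : ℕ) (hd : 3 ≤ d)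
    (h : distG G = d) : 4 ≤ Wgt G := by
  unfold Wgt
  refine le_iInf fun r => le_iInf fun g => le_iInf fun hg => ?_
  by_contra hlt
  push Not at hlt
  have hwt : ∀ i, wt (g i) ≤ 3 := by
    intro i
    have h1 : (wt (g i) : ℕ∞) < 4 :=
      lt_of_le_of_lt (Finset.le_sup (f := fun i => (wt (g i) : ℕ∞)) (Finset.mem_univ i)) hlt
    have h2 : wt (g i) < 4 := by exact_mod_cast h1
    omega
  have hex : ∃ v, inDual G v ∧ v ∉ G := by
    by_contra hne
    push Not at hne
    have h0 : {v | inDual G v ∧ v ∉ G} = ∅ := by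
      ext v; simp only [Set.mem_ofPred_eq, Set.mem_empty_iff_false, iff_false, not_and, not_not]
      exact hne v
    unfold distG at h
    rw [h0, Set.image_empty, sInf_empty] at h
    exact absurd h (by simp)
  obtain ⟨v, v1, v2⟩ := hex
  have hlt2 := finrank_lt G hG v v1 v2
  have hfr : Module.finrank (ZMod 2) G = r := by
    rw [← hg.2, finrank_span_eq_card hg.1, Fintype.card_fin]
  have hrG : ∀ i, g i ∈ G := fun i => hg.2 ▸ Submodule.subset_span ⟨i, rfl⟩
  have hsp : Submodule.span (ZMod 2) ((Finset.univ.image g : Finset (PauliT ι)) : Set (PauliT ι)) = G := by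
    rw [Finset.coe_image, Finset.coe_univ, Set.image_univ, hg.2]
  obtain ⟨u, -, u2, u3, u4⟩ := keyA (Finset.univ : Finset ι) (Finset.univ.image g)
    (fun s _ i hi => absurd (Finset.mem_univ i) hi)
    (by
      intro s hs t ht
      obtain ⟨i, -, rfl⟩ := Finset.mem_image.1 hs
      obtain ⟨j, -, rfl⟩ := Finset.mem_image.1 ht
      exact hG _ (hrG i) _ (hrG j))
    (by
      intro s hs
      obtain ⟨i, -, rfl⟩ := Finset.mem_image.1 hs
      exact hwt i)
    (by
      refine lt_of_le_of_lt Finset.card_image_le ?_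
      rw [Finset.card_univ, Fintype.card_fin, Finset.card_univ]
      omega)
  rw [hsp] at u3
  have hdu : inDual G u := by
    intro x hx
    rw [← hsp] at hx
    exact sympl_span _ u u2 x hx
  have : distG G ≤ (wt u : ℕ∞) := sInf_le ⟨u, ⟨hdu, u3⟩, rfl⟩
  rw [h] at this
  have : d ≤ wt u := by exact_mod_cast this
  omega

lemma Wopt_ge (n k d : ℕ) (hd : 3 ≤ d) : 4 ≤ Wopt n k (d : ℕ∞) := by
  unfold Wopt
  exact le_iInf fun G => le_iInf fun hG => Wgt_ge G hG.1 d hd hG.2.2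

/-- incidence of a line with a face coordinate -/
def al (i r : ℕ) : ZMod 2 := if r = i ∨ r + 1 = i then 1 else 0

lemma al_succ (j c : ℕ) : al (j + 1) c = (if c = j then 1 else 0) + (if c = j + 1 then 1 else 0) := by
  unfold al
  by_cases h1 : c = j
  · subst h1; simp
  · by_cases h2 : c = j + 1
    · subst h2; simp
    · simp [h1, h2]

lemma al_zero (c : ℕ) : al 0 c = (if c = 0 then 1 else 0) := by
  unfold al; simp

lemma al_sec (i r : ℕ) : al i r = (if i = r then 1 else 0) + (if i = r + 1 then 1 else 0) := by
  unfold al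
  by_cases h1 : i = r
  · subst h1; simp
  · by_cases h2 : i = r + 1
    · subst h2; simp
    · have h3 : ¬ (r = i ∨ r + 1 = i) := by omega
      simp [h1, h2, h3]

lemma sal (d : ℕ) (f : ℕ → ZMod 2) (j : ℕ) :
    ∑ c ∈ Finset.range d, f c * al (j + 1) c =
      (if j < d then f j else 0) + (if j + 1 < d then f (j + 1) else 0) := by
  simp only [al_succ, mul_add, Finset.sum_add_distrib, mul_ite, mul_one, mul_zero,
    Finset.sum_ite_eq', Finset.mem_range]

lemma sal0 (d : ℕ) (f : ℕ → ZMod 2) (hd : 0 < d) :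
    ∑ c ∈ Finset.range d, f c * al 0 c = f 0 := by
  simp only [al_zero, mul_ite, mul_one, mul_zero, Finset.sum_ite_eq', Finset.mem_range, hd, if_true]

lemma sal2 (d : ℕ) (f : ℕ → ZMod 2) (r : ℕ) (hr : r < d) :
    ∑ i ∈ Finset.range (d + 1), f i * al i r = f r + f (r + 1) := by
  have h1 : r < d + 1 := by omega
  simp only [al_sec, mul_add, Finset.sum_add_distrib, mul_ite, mul_one, mul_zero,
    Finset.sum_ite_eq', Finset.mem_range, h1, hr, Nat.add_lt_add_iff_right, if_true]

/-- row prefix sums -/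
def PS (F : ℕ → ℕ → ZMod 2) (r j : ℕ) : ZMod 2 := ∑ c ∈ Finset.range j, F r c

lemma PS_succ (F : ℕ → ℕ → ZMod 2) (r j : ℕ) : PS F r (j + 1) = PS F r j + F r j :=
  Finset.sum_range_succ _ _

lemma zsum4 (x y z w p : ZMod 2) (h : x + y + (z + w) = 0) : p + x + y = p + z + w := by
  revert x y z w p; decide

/-- the check equations of one type -/
structure Chk (d e : ℕ) (F : ℕ → ℕ → ZMod 2) : Prop where
  he : e < 2
  h0 : ∀ i, i + 1 < d → (i + 1) % 2 ≠ e → F i 0 + F (i + 1) 0 = 0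
  h1 : ∀ i j, i + 1 < d → j < d → (i + 1 + (j + 1)) % 2 ≠ e →
    F i j + F i (j + 1) + (F (i + 1) j + F (i + 1) (j + 1)) = 0
  hz : ∀ r c, d ≤ c → F r c = 0

lemma Chk.pl1 {d e : ℕ} {F : ℕ → ℕ → ZMod 2} (C : Chk d e F) (i : ℕ) (hi : i + 1 < d) :
    ∀ j, j ≤ d + 1 → (i + 1 + j) % 2 = e → PS F i j = PS F (i + 1) j
  | 0, _, _ => by simp [PS]
  | 1, _, h => by
    have he := C.he
    have := C.h0 i hi (by omega)
    have z : ∀ x y : ZMod 2, x + y = 0 → x = y := by decide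
    simp only [PS, Finset.sum_range_one]
    exact z _ _ this
  | j + 2, hj, h => by
    have ih := Chk.pl1 C i hi j (by omega) (by omega)
    have := C.h1 i j hi (by omega) (by omega)
    rw [PS_succ, PS_succ, PS_succ, PS_succ, ih]
    exact zsum4 _ _ _ _ _ this

lemma Chk.pl2 {d e : ℕ} {F : ℕ → ℕ → ZMod 2} (C : Chk d e F) (i : ℕ) (hi : i < d) :
    PS F i d = PS F 0 d := by
  induction i with
  | zero => rfl
  | succ i ih =>
    rw [← ih (by omega)]
    have he := C.he
    by_cases hp : (i + 1 + d) % 2 = e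
    · exact (C.pl1 i hi d (by omega) hp).symm
    · have := C.pl1 i hi (d + 1) le_rfl (by omega)
      rw [PS_succ, PS_succ, C.hz _ d le_rfl, C.hz _ d le_rfl, add_zero, add_zero] at this
      exact this.symm

/-- coefficients of the faces -/
def cH (d e : ℕ) (F : ℕ → ℕ → ZMod 2) (i j : ℕ) : ZMod 2 :=
  if 1 ≤ j ∧ j < d ∧ (i + j) % 2 = e then PS F (min i (d - 1)) j else 0

lemma Chk.pl4 {d e : ℕ} {F : ℕ → ℕ → ZMod 2} (C : Chk d e F) (h0 : PS F 0 d = 0)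
    (r : ℕ) (hr : r < d) (c : ℕ) (hc : c ≤ d) : cH d e F r c + cH d e F (r + 1) c = PS F r c := by
  have he := C.he
  unfold cH
  by_cases c0 : c = 0
  · subst c0; simp [PS]
  by_cases cd : c = d
  · subst cd; rw [C.pl2 r hr, h0]; simp
  have c1 : 1 ≤ c := by omega
  have c2 : c < d := by omega
  by_cases hp : (r + c) % 2 = e
  · have hp2 : ¬ (r + 1 + c) % 2 = e := by omega
    have hm : min r (d - 1) = r := by omega
    simp only [c1, c2, hp, hp2, hm, and_self, and_false, if_true, if_false, add_zero]
  · have hp2 : (r + 1 + c) % 2 = e := by omega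
    simp only [c1, c2, hp, hp2, and_self, and_false, if_true, if_false, zero_add]
    by_cases hr1 : r + 1 < d
    · have hm : min (r + 1) (d - 1) = r + 1 := by omega
      rw [hm]; exact (C.pl1 r hr1 c (by omega) hp2).symm
    · have hm : min (r + 1) (d - 1) = r := by omega
      rw [hm]

lemma Chk.pl3 {d e : ℕ} {F : ℕ → ℕ → ZMod 2} (C : Chk d e F) (h0 : PS F 0 d = 0)
    (r : ℕ) (hr : r < d) (c : ℕ) (hc : c < d) :
    F r c = ∑ i ∈ Finset.range (d + 1), ∑ j ∈ Finset.range (d + 1),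
      cH d e F i j * (al i r * al j c) := by
  have h1 : ∀ i, ∑ j ∈ Finset.range (d + 1), cH d e F i j * (al i r * al j c) =
      (cH d e F i c + cH d e F i (c + 1)) * al i r := by
    intro i
    rw [← sal2 d (fun j => cH d e F i j) c hc, Finset.sum_mul]
    exact Finset.sum_congr rfl fun j _ => by ring
  simp only [h1]
  rw [sal2 d (fun i => cH d e F i c + cH d e F i (c + 1)) r hr]
  have e1 := C.pl4 h0 r hr c hc.le
  have e2 := C.pl4 h0 r hr (c + 1) hc
  rw [PS_succ] at e2
  have : cH d e F r c + cH d e F r (c + 1) + (cH d e F (r + 1) c + cH d e F (r + 1) (c + 1)) =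
    (cH d e F r c + cH d e F (r + 1) c) + (cH d e F r (c + 1) + cH d e F (r + 1) (c + 1)) := by ring
  rw [this, e1, e2, ← add_assoc]
  have z : ∀ x y : ZMod 2, y = x + x + y := by decide
  exact z _ _

lemma al_ov (i j : ℕ) (h : (i + j) % 2 = 1) : al i j + al i (j + 1) = 0 := by
  unfold al
  by_cases h1 : i = j + 1
  · subst h1; simp; decide
  · have h2 : ¬ (j = i ∨ j + 1 = i) := by omega
    have h3 : ¬ (j + 1 = i ∨ j + 1 + 1 = i) := by omega
    simp [h2, h3]

lemma al_ov2 (d i j : ℕ) (hj : 1 ≤ j) (hjd : j < d) (h : (i + j) % 2 = 0) :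
    ∑ r ∈ Finset.range d, al i r * al j r = 0 := by
  obtain ⟨j, rfl⟩ : ∃ j', j = j' + 1 := ⟨j - 1, by omega⟩
  rw [sal d (fun r => al i r) j]
  have h1 : j < d := by omega
  simp only [h1, hjd, if_true]
  exact al_ov i j (by omega)

/-- coordinates of a Pauli string on the patches -/
def ev {k d : ℕ} (e : ι ≃ Fin k × Fin d × Fin d) (v : PauliT ι) (q : Fin k) (r c : ℕ) :
    ZMod 2 × ZMod 2 :=
  if h : r < d ∧ c < d then v (e.symm (q, ⟨r, h.1⟩, ⟨c, h.2⟩)) else 0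

/-- Pauli string from coordinates -/
def mkP {k d : ℕ} (e : ι ≃ Fin k × Fin d × Fin d) (f : Fin k → ℕ → ℕ → ZMod 2 × ZMod 2) :
    PauliT ι := fun m => f (e m).1 (e m).2.1 (e m).2.2

section surf
variable {k d : ℕ} (e : ι ≃ Fin k × Fin d × Fin d)

lemma ev_mkP (f : Fin k → ℕ → ℕ → ZMod 2 × ZMod 2) (q : Fin k) (r c : ℕ) (hr : r < d) (hc : c < d) :
    ev e (mkP e f) q r c = f q r c := by
  simp [ev, mkP, hr, hc]

lemma ev_out (v : PauliT ι) (q : Fin k) (r c : ℕ) (h : ¬ (r < d ∧ c < d)) : ev e v q r c = 0 := by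
  simp only [ev, h, dite_false]

lemma ev_at (v : PauliT ι) (m : ι) : ev e v (e m).1 (e m).2.1 (e m).2.2 = v m := by
  simp [ev]

lemma ev_add (u v : PauliT ι) (q : Fin k) (r c : ℕ) :
    ev e (u + v) q r c = ev e u q r c + ev e v q r c := by
  unfold ev; split_ifs <;> simp

lemma ev_smul (a : ZMod 2) (v : PauliT ι) (q : Fin k) (r c : ℕ) :
    ev e (a • v) q r c = a • ev e v q r c := by
  unfold ev; split_ifs <;> simp

lemma sympl_mkP (v : PauliT ι) (f : Fin k → ℕ → ℕ → ZMod 2 × ZMod 2) :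
    sympl v (mkP e f) = ∑ q, ∑ r ∈ Finset.range d, ∑ c ∈ Finset.range d,
      lf (ev e v q r c) (f q r c) := by
  rw [sympl_eq, ← Equiv.sum_comp e.symm, Fintype.sum_prod_type]
  refine Finset.sum_congr rfl fun q _ => ?_
  rw [Fintype.sum_prod_type, Finset.sum_range]
  refine Finset.sum_congr rfl fun r _ => ?_
  rw [Finset.sum_range]
  refine Finset.sum_congr rfl fun c _ => ?_
  simp [ev, mkP]

/-- X faces -/
def gX (q : Fin k) (i j : ℕ) : PauliT ι :=
  mkP e fun q' r c => (if q' = q then al i r * al j c else 0, 0)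
/-- Z faces -/
def gZ (q : Fin k) (i j : ℕ) : PauliT ι :=
  mkP e fun q' r c => (0, if q' = q then al i r * al j c else 0)

/-- face sum -/
def BS (d : ℕ) (F : ℕ → ℕ → ZMod 2) (i j : ℕ) : ZMod 2 :=
  ∑ r ∈ Finset.range d, ∑ c ∈ Finset.range d, F r c * (al i r * al j c)

lemma BS_eq (d : ℕ) (F : ℕ → ℕ → ZMod 2) (i j : ℕ) :
    BS d F i j = ∑ r ∈ Finset.range d, (∑ c ∈ Finset.range d, F r c * al j c) * al i r := by
  unfold BS
  refine Finset.sum_congr rfl fun r _ => ?_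
  rw [Finset.sum_mul]
  exact Finset.sum_congr rfl fun c _ => by ring

lemma BS_tr (d : ℕ) (F : ℕ → ℕ → ZMod 2) (i j : ℕ) :
    BS d (fun r c => F c r) i j = BS d F j i := by
  unfold BS
  rw [Finset.sum_comm]
  exact Finset.sum_congr rfl fun r _ => Finset.sum_congr rfl fun c _ => by ring

lemma sympl_gX (v : PauliT ι) (q : Fin k) (i j : ℕ) :
    sympl v (gX e q i j) = BS d (fun r c => (ev e v q r c).2) i j := by
  unfold gX BS
  rw [sympl_mkP, Finset.sum_eq_single q]
  · simp [lf]
  · intro b _ hb; simp [lf, hb]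
  · simp

lemma sympl_gZ (v : PauliT ι) (q : Fin k) (i j : ℕ) :
    sympl v (gZ e q i j) = BS d (fun r c => (ev e v q r c).1) i j := by
  unfold gZ BS
  rw [sympl_mkP, Finset.sum_eq_single q]
  · simp [lf]
  · intro b _ hb; simp [lf, hb]
  · simp

lemma chk_of (d p : ℕ) (hp : p < 2) (F : ℕ → ℕ → ZMod 2) (hF : ∀ r c, ¬ (r < d ∧ c < d) → F r c = 0)
    (h : ∀ i j, 1 ≤ i → i < d → j ≤ d → (i + j) % 2 ≠ p → BS d F i j = 0) : Chk d p F := by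
  have z : ∀ r c, (if c < d then F r c else 0) = F r c := by
    intro r c
    split_ifs with hc
    · rfl
    · exact (hF r c (fun h => hc h.2)).symm
  refine ⟨hp, ?_, ?_, ?_⟩
  · intro i hi hpp
    have := h (i + 1) 0 (by omega) hi (by omega) hpp
    rw [BS_eq, sal] at this
    have h1 : i < d := by omega
    simp only [h1, hi, if_true] at this
    rwa [sal0 d _ (by omega), sal0 d _ (by omega)] at this
  · intro i j hi hj hpp
    have := h (i + 1) (j + 1) (by omega) hi (by omega) hpp
    rw [BS_eq, sal] at this
    have h1 : i < d := by omega
    simp only [h1, hi, if_true] at this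
    rwa [sal, sal, z, z, z, z] at this
  · intro r c hc; exact hF r c (by omega)

/-- generators of the code -/
def Sset : Set (PauliT ι) :=
  {g | ∃ q i j, (i + j) % 2 = 0 ∧ 1 ≤ j ∧ j < d ∧ i ≤ d ∧ g = gX e q i j} ∪
  {g | ∃ q i j, (i + j) % 2 = 1 ∧ 1 ≤ i ∧ i < d ∧ j ≤ d ∧ g = gZ e q i j}

/-- the code -/
def Gsurf : Submodule (ZMod 2) (PauliT ι) := Submodule.span (ZMod 2) (Sset e)

lemma BS_prod (d i j i' j' : ℕ) (F : ℕ → ℕ → ZMod 2)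
    (hF : ∀ r c, r < d → c < d → F r c = al i' r * al j' c) :
    BS d F i j = (∑ r ∈ Finset.range d, al i' r * al i r) *
      ∑ c ∈ Finset.range d, al j' c * al j c := by
  unfold BS
  rw [Finset.sum_mul_sum]
  refine Finset.sum_congr rfl fun r hr => Finset.sum_congr rfl fun c hc => ?_
  rw [hF r c (Finset.mem_range.1 hr) (Finset.mem_range.1 hc)]; ring

lemma BS_zero (d i j : ℕ) (F : ℕ → ℕ → ZMod 2)
    (hF : ∀ r c, r < d → c < d → F r c = 0) : BS d F i j = 0 := by
  unfold BS
  refine Finset.sum_eq_zero fun r hr => Finset.sum_eq_zero fun c hc => ?_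
  rw [hF r c (Finset.mem_range.1 hr) (Finset.mem_range.1 hc), zero_mul]

lemma ev_gX (q q' : Fin k) (i j r c : ℕ) (hr : r < d) (hc : c < d) :
    ev e (gX e q i j) q' r c = (if q' = q then al i r * al j c else 0, 0) := ev_mkP e _ _ _ _ hr hc
lemma ev_gZ (q q' : Fin k) (i j r c : ℕ) (hr : r < d) (hc : c < d) :
    ev e (gZ e q i j) q' r c = (0, if q' = q then al i r * al j c else 0) := ev_mkP e _ _ _ _ hr hc

lemma comm_XZ (q q' : Fin k) (i j i' j' : ℕ) (h : (i + j) % 2 = 0) (hj : 1 ≤ j) (hjd : j < d)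
    (h' : (i' + j') % 2 = 1) (hi : 1 ≤ i') (hid : i' < d) :
    sympl (gX e q i j) (gZ e q' i' j') = 0 := by
  rw [sympl_gZ]
  by_cases hq : q' = q
  · rw [BS_prod d i' j' i j _ (fun r c hr hc => by rw [ev_gX e q q' i j r c hr hc]; simp [hq])]
    by_cases hpar : (i + i') % 2 = 0
    · rw [al_ov2 d i i' hi hid hpar, zero_mul]
    · have : ∑ c ∈ Finset.range d, al j c * al j' c = 0 := by
        rw [← al_ov2 d j' j hj hjd (by omega)]
        exact Finset.sum_congr rfl fun c _ => mul_comm _ _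
      rw [this, mul_zero]
  · exact BS_zero _ _ _ _ fun r c hr hc => by rw [ev_gX e q q' i j r c hr hc]; simp [hq]

lemma comm_S : ∀ s ∈ Sset e, ∀ t ∈ Sset e, sympl s t = 0 := by
  rintro s (⟨q, i, j, h, hj, hjd, hi, rfl⟩ | ⟨q, i, j, h, hj, hjd, hi, rfl⟩) t
    (⟨q', i', j', h', hj', hjd', hi', rfl⟩ | ⟨q', i', j', h', hj', hjd', hi', rfl⟩)
  · rw [sympl_gX]
    exact BS_zero _ _ _ _ fun r c hr hc => by rw [ev_gX e q q' i j r c hr hc]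
  · exact comm_XZ e q q' i j i' j' h hj hjd h' hj' hjd'
  · rw [sympl_comm]
    exact comm_XZ e q' q i' j' i j h' hj' hjd' h hj hjd
  · rw [sympl_gZ]
    exact BS_zero _ _ _ _ fun r c hr hc => by rw [ev_gZ e q q' i j r c hr hc]

lemma stab_G : IsStabilizer (Gsurf e) := by
  intro u hu v hv
  refine sympl_span _ u (fun s hs => ?_) v hv
  rw [sympl_comm]
  exact sympl_span _ s (fun t ht => comm_S e s hs t ht) u hu

lemma dual_iff (v : PauliT ι) : inDual (Gsurf e) v ↔ ∀ s ∈ Sset e, sympl v s = 0 :=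
  ⟨fun h s hs => h s (Submodule.subset_span hs), fun h g hg => sympl_span _ v h g hg⟩

lemma dual_chkX (v : PauliT ι) (h : inDual (Gsurf e) v) (q : Fin k) :
    Chk d 0 (fun r c => (ev e v q r c).1) := by
  refine chk_of d 0 (by norm_num) _ (fun r c hrc => by rw [ev_out e v q r c hrc]; rfl) ?_
  intro i j hi hid hj hp
  rw [← sympl_gZ]
  exact (dual_iff e v).1 h _ (Or.inr ⟨q, i, j, by omega, hi, hid, hj, rfl⟩)

lemma dual_chkZ (v : PauliT ι) (h : inDual (Gsurf e) v) (q : Fin k) :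
    Chk d 1 (fun r c => (ev e v q c r).2) := by
  refine chk_of d 1 (by norm_num) _
    (fun r c hrc => by rw [ev_out e v q c r (fun h => hrc h.symm)]; rfl) ?_
  intro i j hi hid hj hp
  rw [BS_tr d (fun r c => (ev e v q r c).2), ← sympl_gX]
  exact (dual_iff e v).1 h _ (Or.inl ⟨q, j, i, by omega, hi, hid, hj, rfl⟩)

/-- logical parities -/
def Phi : PauliT ι →ₗ[ZMod 2] (Fin k → ZMod 2 × ZMod 2) where
  toFun v := fun q => (PS (fun r c => (ev e v q r c).1) 0 d, PS (fun r c => (ev e v q c r).2) 0 d)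
  map_add' u v := by
    funext q
    simp [PS, ev_add, Finset.sum_add_distrib]
  map_smul' a v := by
    funext q
    simp [PS, ev_smul, Finset.mul_sum]

lemma Phi_apply (v : PauliT ι) (q : Fin k) : Phi e v q =
  (PS (fun r c => (ev e v q r c).1) 0 d, PS (fun r c => (ev e v q c r).2) 0 d) := rfl

lemma mem_of_Phi (v : PauliT ι) (h : inDual (Gsurf e) v) (h0 : Phi e v = 0) : v ∈ Gsurf e := by
  have hx : ∀ q, PS (fun r c => (ev e v q r c).1) 0 d = 0 := fun q =>
    congrArg Prod.fst (congrFun h0 q)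
  have hz : ∀ q, PS (fun r c => (ev e v q c r).2) 0 d = 0 := fun q =>
    congrArg Prod.snd (congrFun h0 q)
  have key : v = (∑ q, ∑ i ∈ Finset.range (d + 1), ∑ j ∈ Finset.range (d + 1),
        cH d 0 (fun r c => (ev e v q r c).1) i j • gX e q i j) +
      ∑ q, ∑ i ∈ Finset.range (d + 1), ∑ j ∈ Finset.range (d + 1),
        cH d 1 (fun r c => (ev e v q c r).2) i j • gZ e q j i := by
    funext m
    have h1 := (dual_chkX e v h (e m).1).pl3 (hx _) (e m).2.1 (e m).2.1.2 (e m).2.2 (e m).2.2.2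
    have h2 := (dual_chkZ e v h (e m).1).pl3 (hz _) (e m).2.2 (e m).2.2.2 (e m).2.1 (e m).2.1.2
    simp only [ev_at] at h1 h2
    rw [Pi.add_apply]
    refine Prod.ext ?_ ?_
    · rw [h1]
      simp only [Finset.sum_apply, Prod.fst_add, Prod.fst_sum, Pi.smul_apply, Prod.smul_fst, gX, gZ,
        mkP, smul_zero, Finset.sum_const_zero, add_zero]
      rw [Finset.sum_eq_single (e m).1]
      · simp
      · intro b _ hb; simp [hb.symm]
      · simp
    · rw [h2]
      simp only [Finset.sum_apply, Prod.snd_add, Prod.snd_sum, Pi.smul_apply, Prod.smul_snd, gX, gZ,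
        mkP, smul_zero, Finset.sum_const_zero, zero_add]
      rw [Finset.sum_eq_single (e m).1]
      · simp [mul_comm (al _ ((e m).2.1 : ℕ))]
      · intro b _ hb; simp [hb.symm]
      · simp
  rw [key]
  refine Submodule.add_mem _ ?_ ?_ <;>
    refine Submodule.sum_mem _ fun q _ => Submodule.sum_mem _ fun i hi =>
      Submodule.sum_mem _ fun j hj => ?_
  all_goals
    have hi := Finset.mem_range.1 hi
    unfold cH
    split_ifs with hc
    · refine Submodule.smul_mem _ _ (Submodule.subset_span ?_)
      first
        | exact Or.inl ⟨q, i, j, hc.2.2, hc.1, hc.2.1, by omega, rfl⟩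
        | exact Or.inr ⟨q, j, i, by rw [add_comm]; exact hc.2.2, hc.1, hc.2.1, by omega, rfl⟩
    · rw [zero_smul]; exact Submodule.zero_mem _

lemma prod_zero (a b : ZMod 2) (ha : a = 0) (hb : b = 0) : (a, b) = (0 : ZMod 2 × ZMod 2) := by
  rw [ha, hb]; rfl

lemma sum_al (d j : ℕ) (hj : 1 ≤ j) (hjd : j < d) (a : ZMod 2) :
    ∑ c ∈ Finset.range d, a * al j c = 0 := by
  obtain ⟨j, rfl⟩ : ∃ j', j = j' + 1 := ⟨j - 1, by omega⟩
  rw [sal d (fun _ => a) j]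
  have h1 : j < d := by omega
  simp only [h1, hjd, if_true]
  exact zm_add_self a

lemma Phi_of_mem (hd : 0 < d) (v : PauliT ι) (h : v ∈ Gsurf e) : Phi e v = 0 := by
  have : Gsurf e ≤ LinearMap.ker (Phi e) := by
    refine Submodule.span_le.2 ?_
    rintro s (⟨q, i, j, h, hj, hjd, hi, rfl⟩ | ⟨q, i, j, h, hj, hjd, hi, rfl⟩)
    · change Phi e _ = 0
      funext q'
      rw [Phi_apply, Pi.zero_apply]
      refine prod_zero _ _ ?_ ?_
      · unfold PS
        by_cases hq : q' = q
        · rw [← sum_al d j hj hjd (al i 0)]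
          refine Finset.sum_congr rfl fun c hc => ?_
          beta_reduce
          rw [ev_gX e q q' i j 0 c hd (Finset.mem_range.1 hc)]; simp [hq]
        · refine Finset.sum_eq_zero fun c hc => ?_
          beta_reduce
          rw [ev_gX e q q' i j 0 c hd (Finset.mem_range.1 hc)]; simp [hq]
      · unfold PS
        refine Finset.sum_eq_zero fun c hc => ?_
        beta_reduce
        rw [ev_gX e q q' i j c 0 (Finset.mem_range.1 hc) hd]
    · change Phi e _ = 0
      funext q'
      rw [Phi_apply, Pi.zero_apply]
      refine prod_zero _ _ ?_ ?_
      · unfold PS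
        refine Finset.sum_eq_zero fun c hc => ?_
        beta_reduce
        rw [ev_gZ e q q' i j 0 c hd (Finset.mem_range.1 hc)]
      · unfold PS
        by_cases hq : q' = q
        · rw [← sum_al d i hj hjd (al j 0)]
          refine Finset.sum_congr rfl fun c hc => ?_
          beta_reduce
          rw [ev_gZ e q q' i j c 0 (Finset.mem_range.1 hc) hd]; simp [hq, mul_comm]
        · refine Finset.sum_eq_zero fun c hc => ?_
          beta_reduce
          rw [ev_gZ e q q' i j c 0 (Finset.mem_range.1 hc) hd]; simp [hq]
  exact this h

/-- logical operators -/
def Lg (t : Fin k → ZMod 2 × ZMod 2) : PauliT ι :=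
  mkP e fun q r c => (if c = 0 then (t q).1 else 0, if r = 0 then (t q).2 else 0)

lemma ev_Lg (t : Fin k → ZMod 2 × ZMod 2) (q : Fin k) (r c : ℕ) (hr : r < d) (hc : c < d) :
    ev e (Lg e t) q r c = (if c = 0 then (t q).1 else 0, if r = 0 then (t q).2 else 0) :=
  ev_mkP e _ _ _ _ hr hc

lemma Lg_Phi (hd : 0 < d) (t : Fin k → ZMod 2 × ZMod 2) : Phi e (Lg e t) = t := by
  funext q
  rw [Phi_apply]
  refine Prod.ext ?_ ?_
  · change ∑ c ∈ Finset.range d, (ev e (Lg e t) q 0 c).1 = _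
    rw [Finset.sum_eq_single_of_mem 0 (Finset.mem_range.2 hd)]
    · rw [ev_Lg e t q 0 0 hd hd]; simp
    · intro c hc hc0; rw [ev_Lg e t q 0 c hd (Finset.mem_range.1 hc)]; simp [hc0]
  · change ∑ c ∈ Finset.range d, (ev e (Lg e t) q c 0).2 = _
    rw [Finset.sum_eq_single_of_mem 0 (Finset.mem_range.2 hd)]
    · rw [ev_Lg e t q 0 0 hd hd]; simp
    · intro c hc hc0; rw [ev_Lg e t q c 0 (Finset.mem_range.1 hc) hd]; simp [hc0]

lemma Lg_dual (t : Fin k → ZMod 2 × ZMod 2) : inDual (Gsurf e) (Lg e t) := by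
  rw [dual_iff]
  rintro s (⟨q, i, j, h, hj, hjd, hi, rfl⟩ | ⟨q, i, j, h, hj, hjd, hi, rfl⟩)
  · rw [sympl_gX]
    unfold BS
    refine Finset.sum_eq_zero fun r hr => ?_
    rw [← sum_al d j hj hjd ((if r = 0 then (t q).2 else 0) * al i r)]
    refine Finset.sum_congr rfl fun c hc => ?_
    beta_reduce
    rw [ev_Lg e t q r c (Finset.mem_range.1 hr) (Finset.mem_range.1 hc)]; ring
  · rw [sympl_gZ]
    unfold BS
    rw [Finset.sum_comm]
    refine Finset.sum_eq_zero fun c hc => ?_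
    rw [← sum_al d i hj hjd ((if c = 0 then (t q).1 else 0) * al j c)]
    refine Finset.sum_congr rfl fun r hr => ?_
    beta_reduce
    rw [ev_Lg e t q r c (Finset.mem_range.1 hr) (Finset.mem_range.1 hc)]; ring

lemma finrank_G (hd : 0 < d) : Module.finrank (ZMod 2) (Gsurf e) = k * d ^ 2 - k := by
  have hle : Gsurf e ≤ dualS (Gsurf e) := fun x hx =>
    (mem_dualS _ x).2 fun g hg => stab_G e x hx g hg
  have h1 := LinearMap.finrank_range_add_finrank_ker ((Phi e).domRestrict (dualS (Gsurf e)))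
  have hr : LinearMap.range ((Phi e).domRestrict (dualS (Gsurf e))) = ⊤ := by
    rw [LinearMap.range_eq_top]
    intro t
    exact ⟨⟨Lg e t, (mem_dualS _ _).2 (Lg_dual e t)⟩, Lg_Phi e hd t⟩
  have hk : LinearMap.ker ((Phi e).domRestrict (dualS (Gsurf e))) =
      (Gsurf e).comap (dualS (Gsurf e)).subtype := by
    ext ⟨x, hx⟩
    rw [LinearMap.mem_ker, Submodule.mem_comap]
    exact ⟨fun h => mem_of_Phi e x ((mem_dualS _ _).1 hx) h, fun h => Phi_of_mem e hd x h⟩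
  rw [hr, hk, LinearEquiv.finrank_eq (Submodule.comapSubtypeEquivOfLe hle), finrank_top,
    finrank_pauli, Fintype.card_fin] at h1
  have h2 := finrank_dual (Gsurf e)
  have h3 : Fintype.card ι = k * d ^ 2 := by
    rw [Fintype.card_congr e]; simp [pow_two]
  rw [h3] at h2
  omega

lemma wt_ge_of (v : PauliT ι) (q : Fin k)
    (h : (∀ r, r < d → ∃ c, ev e v q r c ≠ 0) ∨ (∀ c, c < d → ∃ r, ev e v q r c ≠ 0)) :
    d ≤ wt v := by
  have hin : ∀ r c, ev e v q r c ≠ 0 →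
      ∃ (hr : r < d) (hc : c < d), v (e.symm (q, ⟨r, hr⟩, ⟨c, hc⟩)) ≠ 0 := by
    intro r c hne
    by_cases hrc : r < d ∧ c < d
    · refine ⟨hrc.1, hrc.2, ?_⟩
      simpa only [ev, hrc, and_self, dite_true] using hne
    · exact absurd (ev_out e v q r c hrc) hne
  unfold wt
  rcases h with h | h
  · have : (Finset.range d) ⊆ (Finset.univ.filter fun i => v i ≠ 0).image
        fun m => ((e m).2.1 : ℕ) := by
      intro r hr
      obtain ⟨c, hc⟩ := h r (Finset.mem_range.1 hr)
      obtain ⟨h1, h2, h3⟩ := hin r c hc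
      exact Finset.mem_image.2 ⟨_, Finset.mem_filter.2 ⟨Finset.mem_univ _, h3⟩, by simp⟩
    have := (Finset.card_le_card this).trans Finset.card_image_le
    rwa [Finset.card_range] at this
  · have : (Finset.range d) ⊆ (Finset.univ.filter fun i => v i ≠ 0).image
        fun m => ((e m).2.2 : ℕ) := by
      intro c hc
      obtain ⟨r, hr⟩ := h c (Finset.mem_range.1 hc)
      obtain ⟨h1, h2, h3⟩ := hin r c hr
      exact Finset.mem_image.2 ⟨_, Finset.mem_filter.2 ⟨Finset.mem_univ _, h3⟩, by simp⟩
    have := (Finset.card_le_card this).trans Finset.card_image_le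
    rwa [Finset.card_range] at this

lemma wt_dual (v : PauliT ι) (h : inDual (Gsurf e) v) (hn : v ∉ Gsurf e) : d ≤ wt v := by
  have hP : Phi e v ≠ 0 := fun h0 => hn (mem_of_Phi e v h h0)
  obtain ⟨q, hq⟩ := Function.ne_iff.1 hP
  apply wt_ge_of e v q
  rw [Phi_apply] at hq
  by_contra hcon
  push Not at hcon
  obtain ⟨⟨r, hr, hr0⟩, ⟨c, hc, hc0⟩⟩ := hcon
  apply hq
  rw [Pi.zero_apply]
  refine prod_zero _ _ ?_ ?_
  · rw [← (dual_chkX e v h q).pl2 r hr]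
    refine Finset.sum_eq_zero fun c _ => ?_
    beta_reduce
    rw [hr0 c]; rfl
  · rw [← (dual_chkZ e v h q).pl2 c hc]
    refine Finset.sum_eq_zero fun r _ => ?_
    beta_reduce
    rw [hc0 r]; rfl

lemma dist_G (hk : 1 ≤ k) (hd : 0 < d) : distG (Gsurf e) = d := by
  refine le_antisymm ?_ ?_
  · have hL := Lg_Phi e hd (Pi.single ⟨0, hk⟩ (1, 0))
    have hn : Lg e (Pi.single ⟨0, hk⟩ (1, 0)) ∉ Gsurf e := by
      intro hm
      have h0 := congrFun (hL.symm.trans (Phi_of_mem e hd _ hm)) ⟨0, hk⟩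
      simp at h0
    have h1 : distG (Gsurf e) ≤ (wt (Lg e (Pi.single ⟨0, hk⟩ (1, 0))) : ℕ∞) :=
      sInf_le ⟨_, ⟨Lg_dual e _, hn⟩, rfl⟩
    refine h1.trans ?_
    have : wt (Lg e (Pi.single ⟨0, hk⟩ (1, 0))) ≤ d := by
      unfold wt
      refine (Finset.card_le_card_of_injOn (t := Finset.range d) (fun m => ((e m).2.1 : ℕ)) ?_ ?_).trans
        (Finset.card_range d).le
      · intro m _; exact Finset.mem_coe.2 (Finset.mem_range.2 (e m).2.1.2)
      · have key : ∀ m, Lg e (Pi.single ⟨0, hk⟩ (1, 0)) m ≠ 0 →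
            (e m).1 = ⟨0, hk⟩ ∧ (e m).2.2 = ⟨0, hd⟩ := by
          intro m hm
          by_contra hc
          apply hm
          unfold Lg mkP
          by_cases h1 : (e m).1 = ⟨0, hk⟩
          · have h2 : ((e m).2.2 : ℕ) ≠ 0 := fun h2 => hc ⟨h1, Fin.ext h2⟩
            simp [h1, h2]
          · simp [Pi.single_eq_of_ne h1]
        intro m hm m' hm' heq
        obtain ⟨a1, a2⟩ := key m (Finset.mem_filter.1 hm).2
        obtain ⟨b1, b2⟩ := key m' (Finset.mem_filter.1 hm').2
        apply e.injective
        exact Prod.ext (a1.trans b1.symm) (Prod.ext (Fin.ext heq) (a2.trans b2.symm))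
    exact_mod_cast this
  · refine le_sInf ?_
    rintro _ ⟨v, ⟨h1, h2⟩, rfl⟩
    have := wt_dual e v h1 h2
    beta_reduce
    exact_mod_cast this

lemma wt_face (v : PauliT ι) (q : Fin k) (i j : ℕ)
    (h : ∀ m, v m ≠ 0 → (e m).1 = q ∧ al i (e m).2.1 ≠ 0 ∧ al j (e m).2.2 ≠ 0) : wt v ≤ 4 := by
  have hal : ∀ i r, al i r ≠ 0 → r ∈ ({i - 1, i} : Finset ℕ) := by
    intro i r hne
    unfold al at hne
    have : r = i ∨ r + 1 = i := by
      by_contra hc; simp [hc] at hne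
    simp only [Finset.mem_insert, Finset.mem_singleton]
    omega
  unfold wt
  refine (Finset.card_le_card_of_injOn (t := ({i - 1, i} : Finset ℕ) ×ˢ ({j - 1, j} : Finset ℕ))
    (fun m => (((e m).2.1 : ℕ), ((e m).2.2 : ℕ))) ?_ ?_).trans ?_
  · intro m hm
    obtain ⟨-, h1, h2⟩ := h m (Finset.mem_filter.1 hm).2
    exact Finset.mem_coe.2 (Finset.mem_product.2 ⟨hal _ _ h1, hal _ _ h2⟩)
  · intro m hm m' hm' heq
    obtain ⟨a1, -⟩ := h m (Finset.mem_filter.1 hm).2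
    obtain ⟨b1, -⟩ := h m' (Finset.mem_filter.1 hm').2
    apply e.injective
    simp only [Prod.mk.injEq] at heq
    exact Prod.ext (a1.trans b1.symm) (Prod.ext (Fin.ext heq.1) (Fin.ext heq.2))
  · rw [Finset.card_product]
    exact Nat.mul_le_mul Finset.card_le_two Finset.card_le_two

lemma wt_S : ∀ s ∈ Sset e, wt s ≤ 4 := by
  rintro s (⟨q, i, j, h, hj, hjd, hi, rfl⟩ | ⟨q, i, j, h, hj, hjd, hi, rfl⟩)
  all_goals
    refine wt_face e _ q i j fun m hm => ?_
    by_contra hc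
    apply hm
    first | unfold gX mkP | unfold gZ mkP
    by_cases h1 : (e m).1 = q
    · have : al i (e m).2.1 = 0 ∨ al j (e m).2.2 = 0 := by
        by_contra h2; push Not at h2; exact hc ⟨h1, h2.1, h2.2⟩
      rcases this with h2 | h2 <;> simp [h2]
    · simp [h1]

lemma Wgt_le : Wgt (Gsurf e) ≤ 4 := by
  obtain ⟨b, hb, hs, hli⟩ := exists_linearIndependent (ZMod 2) (Sset e)
  have : Fintype b := Fintype.ofFinite b
  let f := (Fintype.equivFin b).symm
  have hg : IsBasisFam (Gsurf e) (fun i => ((f i : b) : PauliT ι)) := by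
    refine ⟨hli.comp f f.injective, ?_⟩
    have : Set.range (fun i => ((f i : b) : PauliT ι)) = b := by
      have h1 := f.surjective.range_comp (Subtype.val : b → PauliT ι)
      rw [Subtype.range_coe] at h1
      exact h1
    rw [this, hs]; rfl
  unfold Wgt
  refine iInf_le_of_le _ (iInf_le_of_le _ (iInf_le_of_le hg ?_))
  refine Finset.sup_le fun i _ => ?_
  exact_mod_cast wt_S e _ (hb (f i).2)

end surf

lemma Wopt_le (k d : ℕ) (hk : 1 ≤ k) (hd : 0 < d) : Wopt (k * d ^ 2) k (d : ℕ∞) ≤ 4 := by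
  let e : Fin (k * d ^ 2) ≃ Fin k × Fin d × Fin d :=
    Fintype.equivOfCardEq (by simp [pow_two])
  unfold Wopt
  exact (iInf_le_of_le (Gsurf e) (iInf_le _ ⟨stab_G e, finrank_G e hd, dist_G e hk hd⟩)).trans
    (Wgt_le e)


/-- for every `k ≥ 1` and finite `d ≥ 3`, `W_opt(n,k,d) ≥ 4` for all `n`,
equality is attained at `n = k·d²`, and hence the minimum over all blocklengths is `4`. -/
theorem min_Wopt_distance_ge_three (k d : ℕ) (hk : 1 ≤ k) (hd : 3 ≤ d) :
    (∀ n : ℕ, 4 ≤ Wopt n k (d : ℕ∞)) ∧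
    Wopt (k * d ^ 2) k (d : ℕ∞) = 4 ∧
    (⨅ n : ℕ, Wopt n k (d : ℕ∞)) = 4 := by
  have hge : ∀ n : ℕ, 4 ≤ Wopt n k (d : ℕ∞) := fun n => Wopt_ge n k d hd
  have hle := Wopt_le k d hk (by omega)
  exact ⟨hge, le_antisymm hle (hge _), le_antisymm ((iInf_le _ _).trans hle) (le_iInf hge)⟩

end
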